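/- arXiv:2209.00418 — 2 statements merged into one kernel-verified Lean document; each statement's English description precedes it below -/
import Mathlib

section
/- For every increment function δ of size n and every Dyck word P of size n, the number of elements covering P in the alt-Tamari poset Tam^δ_n equals the number of valleys of P (occurrences of the factor du). Consequently, for every two increment functions δ and δ' of size n, the poset Tam^δ_n and the poset Tam^{δ'}_n have the same number of covering relations, namely binomial(2n−1, n−2). -/
/-!
Common definitions.  A letter of a word is a `Bool`: `true` is an up step `u`,
`false` is a down step `d`.  Positions in words are 0-based.
-/

/-- A (possibly empty) Dyck word: as many `u`'s as `d`'s, and every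
prefix has at least as many `u`'s as `d`'s. -/
def IsDyckPath (w : List Bool) : Prop :=
  w.count true = w.count false ∧ ∀ p, p <+: w → p.count false ≤ p.count true

/-- A Dyck word of size `n`: `n` up steps, `n` down steps, every prefix has
at least as many `u`'s as `d`'s. -/
def IsDyckWord (n : ℕ) (w : List Bool) : Prop :=
  w.count true = n ∧ w.count false = n ∧ ∀ p, p <+: w → p.count false ≤ p.count true

/-- The set of Dyck words of size `n`. -/
def DyckSet (n : ℕ) : Set (List Bool) := {w | IsDyckWord n w}

/-- An increment function: a `{0,1}`-valued function (the paper's `δ : {1,…,n} → {0,1}`;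
only the values on `{1,…,n}` are ever used). -/
def IsIncFun (δ : ℕ → ℤ) : Prop := ∀ i, δ i = 0 ∨ δ i = 1

/-- The 0-based position in `w` of the `i`-th up step `u_i` (`i` is 1-based). -/
def upPos (w : List Bool) (i : ℕ) : ℕ :=
  ((List.range w.length).filter fun q => w.getD q false = true).getD (i - 1) 0

/-- `h_i(w)`: the (1-based, between 1 and 2n) position of the up step `u_i` in `w`. -/
def hpos (w : List Bool) (i : ℕ) : ℕ := upPos w i + 1

/-- The change of δ-altitude produced by the letter at position `q` of `w`:
the up step `u_i` contributes `δ i`, a down step contributes `-1`. -/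
def stepVal (δ : ℕ → ℤ) (w : List Bool) (q : ℕ) : ℤ :=
  if w.getD q false = true then δ ((w.take (q + 1)).count true) else -1

/-- The δ-elevation of the factor of `w` occupying positions `a, …, b-1`. -/
def elev (δ : ℕ → ℤ) (w : List Bool) (a b : ℕ) : ℤ :=
  ∑ q ∈ Finset.Ico a b, stepVal δ w q

/-- `C` is the δ-excursion of the up step of `w` at position `p`:
the smallest (nonempty) factor of `w` starting at `p` whose δ-elevation is `0`. -/
def IsDeltaExcAt (δ : ℕ → ℤ) (w : List Bool) (p : ℕ) (C : List Bool) : Prop :=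
  w.getD p false = true ∧
  ∃ m, 0 < m ∧ p + m ≤ w.length ∧ C = (w.drop p).take m ∧
    elev δ w p (p + m) = 0 ∧ ∀ m', 0 < m' → m' < m → elev δ w p (p + m') ≠ 0

/-- `C` is the excursion of the up step of `w` at position `p`: the smallest factor
of `w` starting at `p` that is itself a Dyck word. -/
def IsExcursionAt (w : List Bool) (p : ℕ) (C : List Bool) : Prop :=
  w.getD p false = true ∧
  ∃ m, 0 < m ∧ p + m ≤ w.length ∧ C = (w.drop p).take m ∧ IsDyckPath C ∧
    ∀ m', 0 < m' → m' < m → ¬ IsDyckPath ((w.drop p).take m')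

/-- `ℓ_i(w; δ)`: the length of the δ-excursion of `u_i` in `w`. -/
noncomputable def excLen (δ : ℕ → ℤ) (w : List Bool) (i : ℕ) : ℕ :=
  sInf {m | 0 < m ∧ elev δ w (upPos w i) (upPos w i + m) = 0}

/-- `Q` is the δ-rotation of `P` at some up step: `P = A d C B` with `d u_i` a valley
and `C` the δ-excursion of `u_i`, and `Q = A C d B`. -/
def DeltaRot (δ : ℕ → ℤ) (P Q : List Bool) : Prop :=
  ∃ A C B, P = A ++ false :: (C ++ B) ∧ Q = A ++ (C ++ false :: B) ∧
    IsDeltaExcAt δ P (A.length + 1) C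

/-- The alt-Tamari order `Tam^δ`: reflexive transitive closure of δ-rotations. -/
def altLE (δ : ℕ → ℤ) : List Bool → List Bool → Prop :=
  Relation.ReflTransGen (DeltaRot δ)

/-- The Tamari order: the alt-Tamari order for `δ ≡ 1` (the δ-excursion of any up step
is then its excursion). -/
def tamLE : List Bool → List Bool → Prop := altLE fun _ => 1

/-- The height (number of `u`'s minus number of `d`'s) of the length-`j` prefix of `w`. -/
def prefHeight (w : List Bool) (j : ℕ) : ℤ :=
  ((w.take j).count true : ℤ) - ((w.take j).count false : ℤ)

/-- The Dyck (inclusion) order: every prefix height of `P` is at most that of `Q`. -/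
def dyckLE (P Q : List Bool) : Prop := ∀ j, prefHeight P j ≤ prefHeight Q j

/-- Strict version of a relation `le`. -/
def ltOf (le : List Bool → List Bool → Prop) (P Q : List Bool) : Prop :=
  le P Q ∧ ¬ le Q P

/-- There is a strict chain `P = c 0 < c 1 < ⋯ < c k = Q` inside `S`. -/
def HasChainIn (S : Set (List Bool)) (le : List Bool → List Bool → Prop)
    (P Q : List Bool) (k : ℕ) : Prop :=
  ∃ c : ℕ → List Bool, c 0 = P ∧ c k = Q ∧ (∀ i ≤ k, c i ∈ S) ∧
    ∀ i < k, ltOf le (c i) (c (i + 1))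

/-- The interval `[P,Q]` of the poset `(S, le)` has height `k`: `k` is the maximal
length of a chain from `P` to `Q`. -/
def IntervalHeight (S : Set (List Bool)) (le : List Bool → List Bool → Prop)
    (P Q : List Bool) (k : ℕ) : Prop :=
  HasChainIn S le P Q k ∧ ∀ m, HasChainIn S le P Q m → m ≤ k

/-- The interval `[P,Q]` of the poset `(S, le)` is linear: it is totally ordered. -/
def LinearInterval (S : Set (List Bool)) (le : List Bool → List Bool → Prop)
    (P Q : List Bool) : Prop :=
  P ∈ S ∧ Q ∈ S ∧ le P Q ∧
  ∀ R R', R ∈ S → R' ∈ S → le P R → le R Q → le P R' → le R' Q → le R R' ∨ le R' R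

/-- `Q` covers `P` in the poset `(S, le)`. -/
def CovIn (S : Set (List Bool)) (le : List Bool → List Bool → Prop)
    (P Q : List Bool) : Prop :=
  P ∈ S ∧ Q ∈ S ∧ ltOf le P Q ∧ ∀ R ∈ S, ¬ (ltOf le P R ∧ ltOf le R Q)

/-- The number of valleys (factors `du`) of `w`. -/
def valleys (w : List Bool) : ℕ :=
  ((List.range w.length).filter fun q => !w.getD q true && w.getD (q + 1) false).length

/-!
The `k`-th up step of a Dyck word is preceded by some number of down steps, and a δ-rotation lowers
these numbers by one exactly for the up steps inside the rotated excursion. Moving down steps to the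
right never shortens the δ-excursion of an up step whose own number does not change. Hence a
rotation of `P` followed by further rotations never ends at another rotation of `P`, that is, every
rotation is a covering relation; conversely, covering relations are clearly rotations. As each
valley carries exactly one rotation, the covering relations correspond to Dyck words with a marked
valley.

Deleting the marked valley `du` leaves a Dyck word of size `n - 1` that is cut at a position of
nonzero height, and every such cut arises. With `m = n - 1`, there are `(2m + 1) Cₘ` cuts, where
`Cₘ` is the Catalan number, and `Cₘ₊₁` of them are at height zero, since these are pairs of Dyck
words of total size `m`.
-/

section Heights

variable {h : ℤ} {w A B C : List Bool}

/-- Reading `w` as a lattice path that starts at height `h`, goes up at `true` and down at `false`,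
the path never goes below height `0`. Balanced words with this property for `h = 0` are the Dyck
words; allowing any `h` makes the property compatible with concatenation. -/
def StaysNonneg (h : ℤ) (w : List Bool) : Prop :=
  ∀ p, p <+: w → 0 ≤ h + p.count true - p.count false

theorem StaysNonneg.mono {h' : ℤ} (hw : StaysNonneg h w) (hh : h ≤ h') : StaysNonneg h' w :=
  fun p hp => (hw p hp).trans (by gcongr)

theorem StaysNonneg.start_nonneg (hw : StaysNonneg h w) : 0 ≤ h := by
  simpa using hw [] List.nil_prefix

theorem staysNonneg_nil : StaysNonneg h [] ↔ 0 ≤ h := by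
  simp [StaysNonneg]

theorem forall_prefix_cons_iff {α : Type*} {p : List α → Prop} {x : α} {l : List α} :
    (∀ s, s <+: x :: l → p s) ↔ p [] ∧ ∀ s, s <+: l → p (x :: s) := by
  grind [List.prefix_cons_iff]

theorem staysNonneg_true_cons :
    StaysNonneg h (true :: w) ↔ 0 ≤ h ∧ StaysNonneg (h + 1) w := by
  simp [StaysNonneg, forall_prefix_cons_iff, add_assoc, add_comm (1 : ℤ)]

theorem staysNonneg_false_cons :
    StaysNonneg h (false :: w) ↔ 0 ≤ h ∧ StaysNonneg (h - 1) w := by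
  simp [StaysNonneg, forall_prefix_cons_iff, sub_add_eq_add_sub, sub_sub, add_comm (1 : ℤ)]

theorem staysNonneg_append : StaysNonneg h (A ++ B) ↔
    StaysNonneg h A ∧ StaysNonneg (h + A.count true - A.count false) B := by
  induction A generalizing h with
  | nil => simpa [staysNonneg_nil] using StaysNonneg.start_nonneg
  | cons b A ih =>
    cases b with
    | true =>
      simp [staysNonneg_true_cons, ih, and_assoc, add_assoc, add_comm (1 : ℤ)]
    | false =>
      simp [staysNonneg_false_cons, ih, and_assoc, sub_add_eq_add_sub, sub_sub, add_comm (1 : ℤ)]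

theorem staysNonneg_insert_valley : StaysNonneg h (A ++ false :: true :: B) ↔
    StaysNonneg h (A ++ B) ∧ h + A.count true - A.count false ≠ 0 := by
  simp only [staysNonneg_append, staysNonneg_false_cons, staysNonneg_true_cons, sub_add_cancel]
  constructor
  · rintro ⟨hA, -, hpos, hB⟩
    exact ⟨⟨hA, hB⟩, by omega⟩
  · rintro ⟨⟨hA, hB⟩, hne⟩
    have := hB.start_nonneg
    exact ⟨hA, this, by omega, hB⟩

theorem StaysNonneg.rotate (hw : StaysNonneg h (A ++ false :: (C ++ B))) :
    StaysNonneg h (A ++ (C ++ false :: B)) := by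
  simp only [staysNonneg_append, staysNonneg_false_cons] at hw ⊢
  obtain ⟨hA, -, hC, hB⟩ := hw
  refine ⟨hA, hC.mono (by omega), ?_, hB.mono (by omega)⟩
  have := hB.start_nonneg
  omega

theorem isDyckWord_iff_staysNonneg {n : ℕ} :
    IsDyckWord n w ↔ w.count true = n ∧ w.count false = n ∧ StaysNonneg 0 w := by
  simp [IsDyckWord, StaysNonneg]

theorem IsDyckWord.length_eq {n : ℕ} (hw : IsDyckWord n w) : w.length = 2 * n := by
  rw [← List.count_true_add_count_false, hw.1, hw.2.1, two_mul]

end Heights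

section DownsBefore

/-- The number of down steps of `w` preceding its `k`-th up step, counted from `k = 0`. If `w` has
no such up step, this is the number of all its down steps. The pointwise order on these functions
is the reverse of the inclusion order on Dyck paths. -/
def downsBefore : List Bool → ℕ → ℕ
  | [], _ => 0
  | false :: w, k => downsBefore w k + 1
  | true :: _, 0 => 0
  | true :: w, k + 1 => downsBefore w k

theorem downsBefore_append (A B : List Bool) (k : ℕ) :
    downsBefore (A ++ B) k = if k < A.count true then downsBefore A k
      else A.count false + downsBefore B (k - A.count true) := by
  induction A generalizing k with
  | nil => simp
  | cons b A ih =>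
    cases b with
    | false =>
      simp only [List.cons_append, downsBefore, ih, List.count_cons_self,
        List.count_cons_of_ne (by decide : false ≠ true)]
      split_ifs <;> omega
    | true => cases k <;> simp [downsBefore, ih]

theorem downsBefore_append_count_add (A B : List Bool) (k : ℕ) :
    downsBefore (A ++ B) (A.count true + k) = A.count false + downsBefore B k := by
  simp [downsBefore_append]

theorem downsBefore_append_of_lt {A : List Bool} {k : ℕ} (hk : k < A.count true) (B : List Bool) :
    downsBefore (A ++ B) k = downsBefore A k := by
  rw [downsBefore_append, if_pos hk]

theorem downsBefore_append_true_cons (A B : List Bool) :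
    downsBefore (A ++ true :: B) (A.count true) = A.count false := by
  simpa [downsBefore] using downsBefore_append_count_add A (true :: B) 0

theorem exists_prefix_downsBefore {w : List Bool} {k : ℕ} (hk : k ≤ w.count true) :
    ∃ p, p <+: w ∧ p.count true = k ∧ p.count false = downsBefore w k := by
  induction w generalizing k with
  | nil => exact ⟨[], by simp_all [downsBefore]⟩
  | cons b w ih =>
    cases b with
    | false =>
      obtain ⟨p, hp, htrue, hfalse⟩ := ih (by simpa using hk)
      exact ⟨false :: p, by simpa using hp, by simpa using htrue, by simp [downsBefore, hfalse]⟩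
    | true =>
      cases k with
      | zero => exact ⟨[], by simp [downsBefore]⟩
      | succ k =>
        obtain ⟨p, hp, htrue, hfalse⟩ := ih (by simpa using hk)
        exact ⟨true :: p, by simpa using hp, by simp [htrue], by simp [downsBefore, hfalse]⟩

theorem downsBefore_rotate (A C B : List Bool) (k : ℕ) :
    downsBefore (A ++ false :: (C ++ B)) k = downsBefore (A ++ (C ++ false :: B)) k +
      if A.count true ≤ k ∧ k < A.count true + C.count true then 1 else 0 := by
  simp only [downsBefore_append, downsBefore]
  split_ifs <;> omega

theorem append_true_cons_inj {A A' B B' : List Bool} (h : A ++ true :: B = A' ++ true :: B')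
    (hcount : A.count true = A'.count true) : A = A' ∧ B = B' := by
  have hfalse : A.count false = A'.count false := by
    rw [← downsBefore_append_true_cons A B, h, hcount, downsBefore_append_true_cons]
  have hlength : A.length = A'.length := by
    simp only [← List.count_true_add_count_false, hcount, hfalse]
  simpa using List.append_inj h hlength

end DownsBefore

section Excursions

variable {δ : ℕ → ℤ} {a : ℕ} {w A B C C' W : List Bool}

/-- The elevation that `δ` assigns to the factor `w` of a word in which `w` is preceded by exactly
`a` up steps. -/
def elevAfter (δ : ℕ → ℤ) (a : ℕ) (w : List Bool) : ℤ :=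
  ∑ i ∈ Finset.Ioc a (a + w.count true), δ i - w.count false

theorem elevAfter_concat_true :
    elevAfter δ a (w ++ [true]) = elevAfter δ a w + δ (a + w.count true + 1) := by
  have hcount : (w ++ [true]).count true = w.count true + 1 := by simp
  rw [elevAfter, elevAfter, hcount, ← add_assoc, Finset.sum_Ioc_succ_top (by omega)]
  simp
  ring

theorem elevAfter_concat_false : elevAfter δ a (w ++ [false]) = elevAfter δ a w - 1 := by
  simp [elevAfter, sub_sub]

theorem elevAfter_sub_one_le_concat (hδ : 0 ≤ δ) (x : Bool) :
    elevAfter δ a w - 1 ≤ elevAfter δ a (w ++ [x]) := by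
  cases x with
  | true =>
    have hstep : 0 ≤ δ (a + w.count true + 1) := hδ _
    rw [elevAfter_concat_true]
    omega
  | false => rw [elevAfter_concat_false]

theorem elev_append (δ : ℕ → ℤ) (A W : List Bool) {j : ℕ} (hj : j ≤ W.length) :
    elev δ (A ++ W) A.length (A.length + j) = elevAfter δ (A.count true) (W.take j) := by
  induction j with
  | zero => simp [elev, elevAfter]
  | succ j ih =>
    have hj' : j < W.length := hj
    have hstep : stepVal δ (A ++ W) (A.length + j) =
        if W[j] = true then δ (A.count true + (W.take j ++ [W[j]]).count true) else -1 := by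
      have htake : (A ++ W).take (A.length + j + 1) = A ++ (W.take j ++ [W[j]]) := by
        rw [add_assoc, List.take_length_add_append, List.take_concat_get' W j hj']
      simp [stepVal, htake, hj']
    rw [elev, ← add_assoc, Finset.sum_Ico_succ_top (by omega), ← elev, ih hj'.le, hstep,
      ← List.take_concat_get' W j hj']
    cases W[j] with
    | true => simp [elevAfter_concat_true, add_assoc]
    | false => simp [elevAfter_concat_false, sub_eq_add_neg]

/-- `C` is the δ-excursion of its first letter, an up step, in a word in which it is preceded by
exactly `a` up steps. This depends on the part of the word before `C` only through `a`. -/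
def IsDeltaExc (δ : ℕ → ℤ) (a : ℕ) (C : List Bool) : Prop :=
  (∃ C', C = true :: C') ∧ elevAfter δ a C = 0 ∧
    ∀ p, p <+: C → p ≠ [] → elevAfter δ a p = 0 → p = C

theorem isDeltaExcAt_append_iff : IsDeltaExcAt δ (A ++ (C ++ B)) A.length C ↔
    IsDeltaExc δ (A.count true) C := by
  have helev : ∀ j ≤ C.length, elev δ (A ++ (C ++ B)) A.length (A.length + j) =
      elevAfter δ (A.count true) (C.take j) := fun j hj => by
    rw [elev_append _ _ _ (by simp; omega), List.take_append_of_le_length hj]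
  constructor
  · rintro ⟨hup, m, hm, hle, hC, hzero, hmin⟩
    obtain rfl : C.length = m := by
      have := congrArg List.length hC
      simp at this hle
      omega
    refine ⟨?_, by simpa [helev] using hzero, fun p hp hne hp0 => hp.eq_of_length_le ?_⟩
    · cases C with
      | nil => simp at hm
      | cons x C' => exact ⟨C', by simpa using hup⟩
    · by_contra! hlt
      refine hmin p.length (List.length_pos_iff.2 hne) hlt ?_
      rw [helev _ hlt.le, ← List.prefix_iff_eq_take.1 hp, hp0]
  · rintro ⟨⟨C', rfl⟩, hzero, hmin⟩
    refine ⟨by simp, (true :: C').length, by simp, by simp, by simp, ?_, fun j hj hlt h0 => ?_⟩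
    · rw [helev _ le_rfl, List.take_length, hzero]
    · rw [helev j hlt.le] at h0
      have := congrArg List.length (hmin _ (List.take_prefix j _) (by simp; omega) h0)
      simp only [List.length_take] at this
      omega

theorem IsDeltaExc.count_pos (hC : IsDeltaExc δ a C) : 0 < C.count true := by
  obtain ⟨⟨C', rfl⟩, -⟩ := hC
  simp

theorem IsDeltaExc.eq_of_prefix (hC : IsDeltaExc δ a C) (hC' : IsDeltaExc δ a C')
    (hCW : C <+: W) (hCW' : C' <+: W) : C = C' := by
  have hne : ∀ {D}, IsDeltaExc δ a D → D ≠ [] := by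
    rintro _ ⟨⟨D', rfl⟩, -⟩
    simp
  rcases List.prefix_or_prefix_of_prefix hCW hCW' with h | h
  · exact hC'.2.2 C h (hne hC) hC.2.1
  · exact (hC.2.2 C' h (hne hC') hC'.2.1).symm

theorem IsDeltaExc.append_inj (hC : IsDeltaExc δ a C) (hC' : IsDeltaExc δ a C') {B' : List Bool}
    (h : C ++ B = C' ++ B') : C = C' ∧ B = B' := by
  obtain rfl := hC.eq_of_prefix hC' (List.prefix_append _ B) (h ▸ List.prefix_append _ B')
  exact ⟨rfl, List.append_cancel_left h⟩

theorem exists_isDeltaExc_or_elevAfter_pos_of_proper (hnonneg : 0 ≤ elevAfter δ a (true :: w))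
    (hproper : ∀ p, p <+: true :: w → p ≠ [] → p ≠ true :: w → 0 < elevAfter δ a p) :
    (∃ C, C <+: true :: w ∧ IsDeltaExc δ a C) ∨
      ∀ p, p <+: true :: w → p ≠ [] → 0 < elevAfter δ a p := by
  rcases hnonneg.eq_or_lt' with hzero | hpos
  · refine .inl ⟨true :: w, List.prefix_rfl, ⟨w, rfl⟩, hzero, fun p hp hne hp0 => ?_⟩
    by_contra hpw
    exact (hproper p hp hne hpw).ne' hp0
  · refine .inr fun p hp hne => ?_
    rcases eq_or_ne p (true :: w) with rfl | hpw
    exacts [hpos, hproper p hp hne hpw]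

/- A letter lowers the elevation by at most one, so the elevation cannot become negative without
vanishing first. -/
theorem exists_isDeltaExc_or_elevAfter_pos (hδ : 0 ≤ δ) (a : ℕ) (w : List Bool) :
    (∃ C, C <+: true :: w ∧ IsDeltaExc δ a C) ∨
      ∀ p, p <+: true :: w → p ≠ [] → 0 < elevAfter δ a p := by
  induction w using List.reverseRecOn with
  | nil =>
    refine exists_isDeltaExc_or_elevAfter_pos_of_proper ?_ fun p hp hne hproper => ?_
    · simpa [elevAfter] using hδ (a + 1)
    · simp_all [List.prefix_cons_iff]
  | append_singleton w x ih =>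
    rcases ih with ⟨C, hCw, hC⟩ | hpos
    · exact .inl ⟨C, hCw.trans ⟨[x], rfl⟩, hC⟩
    · refine exists_isDeltaExc_or_elevAfter_pos_of_proper ?_ fun p hp hne hproper => ?_
      · have hlast := hpos _ List.prefix_rfl (List.cons_ne_nil true w)
        have hstep := elevAfter_sub_one_le_concat (a := a) (w := true :: w) hδ x
        rw [List.cons_append] at hstep
        omega
      · rw [← List.cons_append] at hp hproper
        exact hpos p ((List.prefix_concat_iff.1 hp).resolve_left hproper) hne

theorem IsDeltaExc.elevAfter_pos_of_prefix (hδ : 0 ≤ δ) (hC : IsDeltaExc δ a C) {p : List Bool}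
    (hp : p <+: C) (hne : p ≠ []) (hneC : p ≠ C) : 0 < elevAfter δ a p := by
  obtain ⟨C', hC'⟩ := hC.1
  obtain ⟨q, rfl⟩ : ∃ q, p = true :: q := by
    rw [hC', List.prefix_cons_iff] at hp
    obtain ⟨q, hq, -⟩ := hp.resolve_left hne
    exact ⟨q, hq⟩
  refine (exists_isDeltaExc_or_elevAfter_pos hδ a q).elim ?_ fun h => h _ List.prefix_rfl hne
  rintro ⟨D, hD, hexc⟩
  obtain rfl := hexc.eq_of_prefix hC (hD.trans hp) List.prefix_rfl
  exact absurd (hp.eq_of_length_le hD.length_le) hneC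

end Excursions

section Rotations

variable {δ : ℕ → ℤ} {a b c n : ℕ} {P Q Q' S T : List Bool}

/-- `Q` is the δ-rotation of `P` at the up step that is preceded by exactly `a` up steps, and the
δ-excursion of this up step contains `c` up steps. The numbers `a` and `c` determine the effect of
the rotation on `downsBefore`. -/
def IsRotationAt (δ : ℕ → ℤ) (a c : ℕ) (P Q : List Bool) : Prop :=
  ∃ A C B, A.count true = a ∧ C.count true = c ∧ IsDeltaExc δ a C ∧
    P = A ++ false :: (C ++ B) ∧ Q = A ++ (C ++ false :: B)

theorem isDeltaExcAt_valley_iff {A C B : List Bool} :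
    IsDeltaExcAt δ (A ++ false :: (C ++ B)) (A.length + 1) C ↔ IsDeltaExc δ (A.count true) C := by
  simpa using isDeltaExcAt_append_iff (δ := δ) (A := A ++ [false]) (C := C) (B := B)

theorem deltaRot_iff_exists_isRotationAt : DeltaRot δ P Q ↔ ∃ a c, IsRotationAt δ a c P Q := by
  constructor
  · rintro ⟨A, C, B, rfl, rfl, hC⟩
    exact ⟨_, _, A, C, B, rfl, rfl, isDeltaExcAt_valley_iff.1 hC, rfl, rfl⟩
  · rintro ⟨_, _, A, C, B, rfl, rfl, hC, rfl, rfl⟩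
    exact ⟨A, C, B, rfl, rfl, isDeltaExcAt_valley_iff.2 hC⟩

theorem IsRotationAt.pos (h : IsRotationAt δ a c P Q) : 0 < c := by
  obtain ⟨A, C, B, rfl, rfl, hC, -, -⟩ := h
  exact hC.count_pos

theorem IsRotationAt.downsBefore_eq (h : IsRotationAt δ a c P Q) (k : ℕ) :
    downsBefore P k = downsBefore Q k + if a ≤ k ∧ k < a + c then 1 else 0 := by
  obtain ⟨A, C, B, rfl, rfl, -, rfl, rfl⟩ := h
  exact downsBefore_rotate A C B k

theorem IsRotationAt.downsBefore_le (h : IsRotationAt δ a c P Q) (k : ℕ) :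
    downsBefore Q k ≤ downsBefore P k := by
  have := h.downsBefore_eq k
  omega

theorem IsRotationAt.downsBefore_lt_iff (h : IsRotationAt δ a c P Q) {k : ℕ} :
    downsBefore Q k < downsBefore P k ↔ a ≤ k ∧ k < a + c := by
  rw [h.downsBefore_eq k]
  split_ifs with hk <;> simp [hk]

theorem IsRotationAt.downsBefore_lt (h : IsRotationAt δ a c P Q) :
    downsBefore Q a < downsBefore P a :=
  h.downsBefore_lt_iff.2 ⟨le_rfl, Nat.lt_add_of_pos_right h.pos⟩

theorem IsDeltaExc.downsBefore_valley {C : List Bool} (hC : IsDeltaExc δ a C) (A B : List Bool) :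
    downsBefore (A ++ false :: (C ++ B)) (A.count true) = A.count false + 1 := by
  obtain ⟨C', rfl⟩ := hC.1
  simpa using downsBefore_append_true_cons (A ++ [false]) (C' ++ B)

theorem IsRotationAt.downsBefore_add_lt (hδ : 0 ≤ δ) (h : IsRotationAt δ a c P Q) {k : ℕ}
    (hk : 0 < k) (hkc : k < c) :
    (downsBefore P (a + k) : ℤ) < downsBefore P a + ∑ i ∈ Finset.Ioc a (a + k), δ i := by
  obtain ⟨A, C, B, rfl, rfl, hC, rfl, -⟩ := h
  obtain ⟨p, hp, htrue, hfalse⟩ := exists_prefix_downsBefore hkc.le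
  have hpos : 0 < elevAfter δ (A.count true) p := by
    refine hC.elevAfter_pos_of_prefix hδ hp ?_ ?_ <;> rintro rfl
    · exact hk.ne htrue
    · exact hkc.ne' htrue
  rw [elevAfter, htrue, hfalse] at hpos
  rw [hC.downsBefore_valley, downsBefore_append_count_add, downsBefore,
    downsBefore_append_of_lt hkc]
  omega

theorem IsRotationAt.le_downsBefore_add (h : IsRotationAt δ a c P Q) :
    downsBefore P a + ∑ i ∈ Finset.Ioc a (a + c), δ i ≤ downsBefore P (a + c) := by
  obtain ⟨A, C, B, rfl, rfl, hC, rfl, -⟩ := h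
  have hzero : elevAfter δ (A.count true) C = 0 := hC.2.1
  have hend : downsBefore (C ++ B) (C.count true) = C.count false + downsBefore B 0 :=
    downsBefore_append_count_add C B 0
  rw [elevAfter] at hzero
  rw [hC.downsBefore_valley, downsBefore_append_count_add, downsBefore, hend]
  omega

theorem IsRotationAt.target_unique (h : IsRotationAt δ a b P Q) (h' : IsRotationAt δ a c P Q') :
    Q = Q' := by
  obtain ⟨A, C, B, rfl, -, hC, rfl, rfl⟩ := h
  obtain ⟨A', C', B', hA, -, hC', hP, rfl⟩ := h'
  obtain ⟨D, rfl⟩ := hC.1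
  obtain ⟨D', rfl⟩ := hC'.1
  obtain ⟨hAA', htail⟩ := append_true_cons_inj (A := A ++ [false]) (A' := A' ++ [false])
    (by simpa using hP) (by simpa using hA.symm)
  obtain rfl : A = A' := by simpa using hAA'
  have hsuffix : true :: D ++ B = true :: D' ++ B' := by simpa using htail
  obtain ⟨hexc, rfl⟩ := hC.append_inj hC' hsuffix
  rw [hexc]

/- Excursions grow along the order: passing from `P` to `S` moves down steps to the right, except
those before the up step where the excursion starts. -/
theorem IsRotationAt.up_count_mono (hδ : 0 ≤ δ) (hP : IsRotationAt δ a b P Q)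
    (hS : IsRotationAt δ a c S T) (hle : ∀ k, downsBefore S k ≤ downsBefore P k)
    (ha : downsBefore S a = downsBefore P a) : b ≤ c := by
  by_contra! hlt
  have hupper := hP.downsBefore_add_lt hδ hS.pos hlt
  have hlower := hS.le_downsBefore_add
  have := hle (a + c)
  omega

theorem altLE.downsBefore_le (h : altLE δ P Q) (k : ℕ) : downsBefore Q k ≤ downsBefore P k := by
  induction h with
  | refl => exact le_rfl
  | tail _ hstep ih =>
    obtain ⟨a, c, hrot⟩ := deltaRot_iff_exists_isRotationAt.1 hstep
    exact (hrot.downsBefore_le k).trans ih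

theorem DeltaRot.not_altLE (h : DeltaRot δ P Q) : ¬ altLE δ Q P := by
  obtain ⟨a, c, hrot⟩ := deltaRot_iff_exists_isRotationAt.1 h
  exact fun hle => (hle.downsBefore_le a).not_gt hrot.downsBefore_lt

theorem altLE.antisymm (h : altLE δ P Q) (h' : altLE δ Q P) : P = Q := by
  rcases Relation.ReflTransGen.cases_head h with rfl | ⟨R, hPR, hRQ⟩
  · rfl
  · exact absurd (Relation.ReflTransGen.trans hRQ h') hPR.not_altLE

/- On a path from `S` to `Q`, some rotation lowers the entry at `a`. Excursions having grown, it
lowers every entry in which `P` and `Q` differ, so no other entry can have been lowered before. -/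
theorem IsRotationAt.downsBefore_le_of_altLE (hδ : 0 ≤ δ) (h : IsRotationAt δ a c P Q)
    (hSQ : altLE δ S Q) (hle : ∀ k, downsBefore S k ≤ downsBefore P k)
    (ha : downsBefore S a = downsBefore P a) (k : ℕ) : downsBefore P k ≤ downsBefore S k := by
  induction hSQ using Relation.ReflTransGen.head_induction_on with
  | refl => exact absurd ha h.downsBefore_lt.ne
  | @head S T hST hTQ ih =>
    obtain ⟨b, d, hrot⟩ := deltaRot_iff_exists_isRotationAt.1 hST
    have hTQ' : ∀ k, downsBefore Q k ≤ downsBefore T k := altLE.downsBefore_le hTQ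
    by_cases hTa : downsBefore T a = downsBefore P a
    · exact (ih (fun k => (hrot.downsBefore_le k).trans (hle k)) hTa).trans (hrot.downsBefore_le k)
    have hba : b ≤ a := by
      have := hrot.downsBefore_le a
      exact (hrot.downsBefore_lt_iff.1 (by omega)).1
    obtain rfl : b = a := by
      have hQb : downsBefore Q b < downsBefore P b :=
        ((hTQ' b).trans_lt hrot.downsBefore_lt).trans_le (hle b)
      exact hba.antisymm (h.downsBefore_lt_iff.1 hQb).1
    have hcd : c ≤ d := h.up_count_mono hδ hrot hle ha
    have hP := h.downsBefore_eq k
    have hS := hrot.downsBefore_eq k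
    have hQT := hTQ' k
    split_ifs at hP hS <;> omega

theorem DeltaRot.eq_of_altLE (hδ : 0 ≤ δ) (hQ : DeltaRot δ P Q) (hS : DeltaRot δ P S)
    (hle : altLE δ S Q) : S = Q := by
  obtain ⟨a, c, hrotQ⟩ := deltaRot_iff_exists_isRotationAt.1 hQ
  obtain ⟨b, d, hrotS⟩ := deltaRot_iff_exists_isRotationAt.1 hS
  have hab : a ≤ b :=
    (hrotQ.downsBefore_lt_iff.1 ((hle.downsBefore_le b).trans_lt hrotS.downsBefore_lt)).1
  have hSa : downsBefore S a < downsBefore P a := by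
    refine (hrotS.downsBefore_le a).lt_of_ne fun hSa => ?_
    have := hrotQ.downsBefore_le_of_altLE hδ hle hrotS.downsBefore_le hSa b
    exact this.not_gt hrotS.downsBefore_lt
  obtain rfl : a = b := hab.antisymm (hrotS.downsBefore_lt_iff.1 hSa).1
  exact hrotS.target_unique hrotQ

theorem DeltaRot.isDyckWord (h : DeltaRot δ P Q) (hP : IsDyckWord n P) : IsDyckWord n Q := by
  obtain ⟨A, C, B, rfl, rfl, -⟩ := h
  rw [isDyckWord_iff_staysNonneg] at hP ⊢
  obtain ⟨htrue, hfalse, hnonneg⟩ := hP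
  refine ⟨?_, ?_, hnonneg.rotate⟩
  · simpa using htrue
  · rw [← hfalse]
    simp
    omega

theorem covIn_iff_deltaRot (hδ : 0 ≤ δ) :
    CovIn (DyckSet n) (altLE δ) P Q ↔ IsDyckWord n P ∧ DeltaRot δ P Q := by
  constructor
  · rintro ⟨hP, -, ⟨hle, hnle⟩, hcov⟩
    refine ⟨hP, ?_⟩
    rcases Relation.ReflTransGen.cases_head hle with rfl | ⟨R, hPR, hRQ⟩
    · exact absurd hle hnle
    · have hQR : altLE δ Q R := by
        by_contra hQR
        exact hcov R (hPR.isDyckWord hP) ⟨⟨.single hPR, hPR.not_altLE⟩, hRQ, hQR⟩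
      rwa [hQR.antisymm hRQ]
  · rintro ⟨hP, hPQ⟩
    refine ⟨hP, hPQ.isDyckWord hP, ⟨.single hPQ, hPQ.not_altLE⟩, ?_⟩
    rintro R - ⟨⟨hPR, hRP⟩, hRQ, hQR⟩
    rcases Relation.ReflTransGen.cases_head hPR with rfl | ⟨S, hPS, hSR⟩
    · exact hRP hPR
    · obtain rfl := hPQ.eq_of_altLE hδ hPS (Relation.ReflTransGen.trans hSR hRQ)
      exact hQR hSR

end Rotations

section Valleys

variable {δ : ℕ → ℤ} {n : ℕ} {S : Set (List Bool)}

/-- The final segments of `δ` on `{2, …, n}` have average at most one. For nonnegative `δ`, this is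
what makes every valley of every Dyck word of size `n` have a δ-rotation. -/
def IsTailBounded (n : ℕ) (δ : ℕ → ℤ) : Prop :=
  ∀ a ∈ Set.Icc 1 n, ∑ i ∈ Finset.Ioc a n, δ i ≤ n - a

theorem IsIncFun.nonneg (hδ : IsIncFun δ) : 0 ≤ δ := fun i => by
  rcases hδ i with h | h <;> simp [h]

theorem IsIncFun.isTailBounded (hδ : IsIncFun δ) (n : ℕ) : IsTailBounded n δ := fun a ha => by
  have hle : ∀ i ∈ Finset.Ioc a n, δ i ≤ 1 := fun i _ => by rcases hδ i with h | h <;> simp [h]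
  simpa [Nat.cast_sub ha.2] using Finset.sum_le_card_nsmul _ _ _ hle

theorem IsDyckWord.exists_isDeltaExc (hδ : 0 ≤ δ) (hδn : IsTailBounded n δ) {A B : List Bool}
    (hP : IsDyckWord n (A ++ false :: true :: B)) :
    ∃ C, C <+: true :: B ∧ IsDeltaExc δ (A.count true) C := by
  refine (exists_isDeltaExc_or_elevAfter_pos hδ _ B).resolve_right fun hpos => ?_
  obtain ⟨htrue, hfalse, hprefix⟩ := hP
  have hvalley : A.count false + 1 ≤ A.count true := by
    simpa using hprefix (A ++ [false]) ⟨true :: B, by simp⟩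
  have hend : A.count true + (true :: B).count true = n := by simpa using htrue
  have hdowns : A.count false + 1 + (true :: B).count false = n := by
    simp at hfalse ⊢
    omega
  have htail := hδn (A.count true) ⟨by omega, by omega⟩
  have hwhole := hpos _ List.prefix_rfl (List.cons_ne_nil true B)
  rw [elevAfter, hend] at hwhole
  omega

/-- The words of `S` with a marked valley: `(A, B)` represents the word `A d u B`. -/
def valleyMarkings (S : Set (List Bool)) : Set (List Bool × List Bool) :=
  {v | v.1 ++ false :: true :: v.2 ∈ S}

/-- The δ-rotations of words of `S`: `(A, C, B)` represents the rotation of `A d C B` to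
`A C d B`. -/
def rotations (δ : ℕ → ℤ) (S : Set (List Bool)) : Set (List Bool × List Bool × List Bool) :=
  {t | IsDeltaExc δ (t.1.count true) t.2.1 ∧ t.1 ++ false :: (t.2.1 ++ t.2.2) ∈ S}

theorem eq_of_append_cons_eq_of_append_cons_eq {α : Type*} {x y : α} (hxy : x ≠ y)
    {A A' s s' t t' : List α} (hx : A ++ x :: s = A' ++ x :: s')
    (hy : A ++ y :: t = A' ++ y :: t') : A = A' := by
  induction A generalizing A' <;> cases A' <;> simp_all

theorem ncard_deltaRot_eq_rotations :
    {pq : List Bool × List Bool | pq.1 ∈ S ∧ DeltaRot δ pq.1 pq.2}.ncard =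
      (rotations δ S).ncard := by
  have himage : {pq : List Bool × List Bool | pq.1 ∈ S ∧ DeltaRot δ pq.1 pq.2} =
      (fun t => (t.1 ++ false :: (t.2.1 ++ t.2.2), t.1 ++ (t.2.1 ++ false :: t.2.2))) ''
        rotations δ S := by
    ext ⟨P, Q⟩
    constructor
    · rintro ⟨hP, A, C, B, rfl, rfl, hC⟩
      exact ⟨(A, C, B), ⟨isDeltaExcAt_valley_iff.1 hC, hP⟩, rfl⟩
    · rintro ⟨⟨A, C, B⟩, ⟨hC, hP⟩, heq⟩
      obtain ⟨rfl, rfl⟩ := Prod.ext_iff.1 heq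
      exact ⟨hP, A, C, B, rfl, rfl, isDeltaExcAt_valley_iff.2 hC⟩
  rw [himage, Set.InjOn.ncard_image]
  rintro ⟨A, C, B⟩ ⟨hC, -⟩ ⟨A', C', B'⟩ ⟨hC', -⟩ heq
  obtain ⟨hsource, htarget⟩ := Prod.ext_iff.1 heq
  dsimp only at hC hC' hsource htarget
  obtain rfl : A = A' := by
    obtain ⟨⟨D, rfl⟩, -⟩ := hC
    obtain ⟨⟨D', rfl⟩, -⟩ := hC'
    exact eq_of_append_cons_eq_of_append_cons_eq Bool.false_ne_true hsource htarget
  have hsuffix : C ++ B = C' ++ B' := by simpa using hsource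
  obtain ⟨rfl, rfl⟩ := hC.append_inj hC' hsuffix
  rfl

theorem ncard_valleyMarkings_eq_rotations (hδ : 0 ≤ δ) (hδn : IsTailBounded n δ)
    (hS : S ⊆ DyckSet n) : (valleyMarkings S).ncard = (rotations δ S).ncard := by
  have himage : valleyMarkings S = (fun t => (t.1, (t.2.1 ++ t.2.2).tail)) '' rotations δ S := by
    ext ⟨A, B⟩
    constructor
    · intro hAB
      obtain ⟨C, ⟨D, hD⟩, hC⟩ := IsDyckWord.exists_isDeltaExc hδ hδn (hS hAB)
      refine ⟨(A, C, D), ⟨hC, ?_⟩, by simp [hD]⟩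
      change A ++ false :: (C ++ D) ∈ S
      rwa [hD]
    · rintro ⟨⟨A, C, D⟩, ⟨⟨⟨C', hC⟩, -⟩, hP⟩, heq⟩
      dsimp only at hC hP
      subst hC
      obtain ⟨rfl, rfl⟩ := Prod.ext_iff.1 heq
      exact hP
  rw [himage, Set.InjOn.ncard_image]
  rintro ⟨A, C, B⟩ ⟨hC, -⟩ ⟨A', C', B'⟩ ⟨hC', -⟩ heq
  obtain ⟨rfl, htail⟩ := Prod.ext_iff.1 heq
  have hsuffix : C ++ B = C' ++ B' := by
    obtain ⟨⟨D, rfl⟩, -⟩ := hC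
    obtain ⟨⟨D', rfl⟩, -⟩ := hC'
    exact congrArg (true :: ·) htail
  obtain ⟨rfl, rfl⟩ := hC.append_inj hC' hsuffix
  rfl

theorem valleys_eq_card (P : List Bool) : valleys P =
    ((Finset.range P.length).filter fun q => !P.getD q true && P.getD (q + 1) false).card := by
  rw [valleys, ← List.toFinset_card_of_nodup (List.nodup_range.filter _), List.toFinset_filter,
    List.toFinset_range]

theorem ncard_valleyMarkings_singleton (P : List Bool) :
    (valleyMarkings {P}).ncard = valleys P := by
  rw [valleys_eq_card, ← Set.ncard_coe_finset]
  refine Set.ncard_congr (fun v _ => v.1.length) ?_ ?_ ?_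
  · rintro ⟨A, B⟩ rfl
    simp
  · rintro ⟨A, B⟩ ⟨A', B'⟩ rfl hP hlength
    simpa [eq_comm] using List.append_inj (Set.mem_singleton_iff.1 hP) hlength.symm
  · intro q hq
    simp only [Finset.coe_filter, Finset.mem_range, Set.mem_ofPred_eq, Bool.and_eq_true,
      Bool.not_eq_true'] at hq
    obtain ⟨hlt, hdown, hup⟩ := hq
    have hlt' : q + 1 < P.length := by
      by_contra hge
      rw [List.getD_eq_default _ _ (not_lt.1 hge)] at hup
      exact Bool.false_ne_true hup
    rw [List.getD_eq_getElem _ _ hlt] at hdown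
    rw [List.getD_eq_getElem _ _ hlt'] at hup
    refine ⟨(P.take q, P.drop (q + 2)), ?_, by simpa using hlt.le⟩
    change P.take q ++ false :: true :: P.drop (q + 2) = P
    rw [← hdown, ← hup, List.getElem_cons_drop, List.getElem_cons_drop, List.take_append_drop]

end Valleys

section Counting

variable {m n : ℕ} {A B : List Bool}

theorem isDyckWord_append_and_count_eq_iff :
    IsDyckWord m (A ++ B) ∧ A.count true = A.count false ↔
      ∃ ij ∈ Finset.HasAntidiagonal.antidiagonal m, IsDyckWord ij.1 A ∧ IsDyckWord ij.2 B := by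
  simp only [isDyckWord_iff_staysNonneg, staysNonneg_append, List.count_append,
    Finset.HasAntidiagonal.mem_antidiagonal]
  constructor
  · rintro ⟨⟨htrue, hfalse, hA, hB⟩, hbal⟩
    refine ⟨(A.count true, B.count true), htrue, ⟨rfl, hbal.symm, hA⟩, rfl, by omega, ?_⟩
    simpa [hbal] using hB
  · rintro ⟨⟨i, j⟩, rfl, ⟨rfl, hbal, hA⟩, rfl, hfalse, hB⟩
    refine ⟨⟨rfl, by omega, hA, ?_⟩, hbal.symm⟩
    simpa [hbal] using hB

theorem isDyckWord_insert_valley : IsDyckWord (m + 1) (A ++ false :: true :: B) ↔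
    IsDyckWord m (A ++ B) ∧ A.count true ≠ A.count false := by
  simp only [isDyckWord_iff_staysNonneg, staysNonneg_insert_valley, List.count_append,
    List.count_cons]
  simp [← add_assoc, sub_eq_zero, and_assoc]

/-- Up steps `true` and down steps `false` as the letters of Mathlib's `DyckWord`. -/
def boolEquivDyckStep : Bool ≃ DyckStep where
  toFun b := if b then .U else .D
  invFun s := s = .U
  left_inv := by decide
  right_inv s := by cases s <;> rfl

theorem count_true_map_boolEquivDyckStep_symm (l : List DyckStep) :
    (l.map boolEquivDyckStep.symm).count true = l.count .U :=
  List.count_map_of_injective l _ boolEquivDyckStep.symm.injective .U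

theorem count_false_map_boolEquivDyckStep_symm (l : List DyckStep) :
    (l.map boolEquivDyckStep.symm).count false = l.count .D :=
  List.count_map_of_injective l _ boolEquivDyckStep.symm.injective .D

theorem isDyckWord_map_boolEquivDyckStep_symm_iff {l : List DyckStep} :
    IsDyckWord n (l.map boolEquivDyckStep.symm) ↔
      ∃ p : DyckWord, p.toList = l ∧ p.semilength = n := by
  simp only [IsDyckWord, count_true_map_boolEquivDyckStep_symm,
    count_false_map_boolEquivDyckStep_symm]
  constructor
  · rintro ⟨hU, hD, hprefix⟩
    refine ⟨⟨l, hU.trans hD.symm, fun i => ?_⟩, rfl, hU⟩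
    simpa only [count_true_map_boolEquivDyckStep_symm, count_false_map_boolEquivDyckStep_symm]
      using hprefix _ ((List.take_prefix i l).map _)
  · rintro ⟨p, rfl, rfl⟩
    refine ⟨rfl, p.count_U_eq_count_D.symm, fun q hq => ?_⟩
    rw [List.prefix_iff_eq_take.1 hq, ← List.map_take, count_true_map_boolEquivDyckStep_symm,
      count_false_map_boolEquivDyckStep_symm]
    exact p.count_D_le_count_U _

theorem ncard_dyckSet (n : ℕ) : (DyckSet n).ncard = catalan n := by
  have himage : DyckSet n =
      (fun p : DyckWord => p.toList.map boolEquivDyckStep.symm) '' {p | p.semilength = n} := by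
    ext w
    obtain ⟨l, rfl⟩ := List.map_surjective_iff.2 boolEquivDyckStep.symm.surjective w
    have hinj := List.map_injective_iff.2 boolEquivDyckStep.symm.injective
    simp [DyckSet, isDyckWord_map_boolEquivDyckStep_symm_iff, hinj.eq_iff, and_comm]
  rw [himage, Set.ncard_image_of_injective _ fun p q hpq => DyckWord.ext <|
    List.map_injective_iff.2 boolEquivDyckStep.symm.injective hpq,
    ← DyckWord.card_dyckWord_semilength_eq_catalan, ← Nat.card_eq_fintype_card,
    ← Nat.card_coe_set_eq]
  rfl

theorem finite_dyckSet (n : ℕ) : (DyckSet n).Finite :=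
  (List.finite_length_eq Bool (2 * n)).subset fun _ => IsDyckWord.length_eq

/-- The ways to cut a Dyck word of size `m` into two factors. -/
def dyckSplittings (m : ℕ) : Set (List Bool × List Bool) :=
  {v | IsDyckWord m (v.1 ++ v.2)}

theorem dyckSplittings_eq_image (m : ℕ) : dyckSplittings m =
    (fun x : List Bool × ℕ => (x.1.take x.2, x.1.drop x.2)) ''
      (DyckSet m ×ˢ (Finset.range (2 * m + 1) : Set ℕ)) := by
  ext ⟨A, B⟩
  constructor
  · intro hAB
    have hlength : A.length + B.length = 2 * m := by simpa using hAB.length_eq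
    exact ⟨(A ++ B, A.length), ⟨hAB, by simp; omega⟩, by simp⟩
  · rintro ⟨⟨P, q⟩, ⟨hP, -⟩, heq⟩
    obtain ⟨rfl, rfl⟩ := Prod.ext_iff.1 heq
    change IsDyckWord m (P.take q ++ P.drop q)
    rwa [List.take_append_drop]

theorem ncard_dyckSplittings (m : ℕ) : (dyckSplittings m).ncard = (2 * m + 1) * catalan m := by
  rw [dyckSplittings_eq_image, Set.InjOn.ncard_image, Set.ncard_prod, ncard_dyckSet,
    Set.ncard_coe_finset, Finset.card_range, mul_comm]
  rintro ⟨P, q⟩ ⟨hP, hq⟩ ⟨P', q'⟩ ⟨hP', hq'⟩ heq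
  obtain ⟨htake, hdrop⟩ := Prod.ext_iff.1 heq
  obtain rfl : P = P' := by
    rw [← List.take_append_drop q P, ← List.take_append_drop q' P']
    exact congrArg₂ _ htake hdrop
  have hlength := congrArg List.length htake
  simp only [List.length_take, IsDyckWord.length_eq hP] at hlength
  simp only [Finset.coe_range, Set.mem_Iio] at hq hq'
  obtain rfl : q = q' := by omega
  rfl

theorem finite_dyckSplittings (m : ℕ) : (dyckSplittings m).Finite := by
  rw [dyckSplittings_eq_image]
  exact ((finite_dyckSet m).prod (Finset.finite_toSet _)).image _

theorem ncard_dyckSplittings_inter_balanced (m : ℕ) :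
    (dyckSplittings m ∩ {v | v.1.count true = v.1.count false}).ncard = catalan (m + 1) := by
  classical
  let words (i : ℕ) : Finset (List Bool) := (finite_dyckSet i).toFinset
  have hcard (i : ℕ) : (words i).card = catalan i := by
    rw [← ncard_dyckSet, Set.ncard_eq_toFinset_card _ (finite_dyckSet i)]
  have hunion : dyckSplittings m ∩ {v | v.1.count true = v.1.count false} =
      (Finset.HasAntidiagonal.antidiagonal m).biUnion fun ij => words ij.1 ×ˢ words ij.2 := by
    ext ⟨A, B⟩
    change IsDyckWord m (A ++ B) ∧ A.count true = A.count false ↔ _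
    rw [isDyckWord_append_and_count_eq_iff]
    simp only [words, DyckSet, Finset.coe_biUnion, Finset.coe_product, Set.Finite.coe_toFinset,
      Set.mem_iUnion, Set.mem_prod, Set.mem_ofPred_eq, Finset.mem_coe, exists_prop]
  rw [hunion, Set.ncard_coe_finset, Finset.card_biUnion, catalan_succ']
  · simp only [Finset.card_product, hcard]
  · rintro ⟨i, j⟩ - ⟨i', j'⟩ - hne
    refine Finset.disjoint_left.2 ?_
    rintro ⟨A, B⟩ h h'
    simp only [words, Finset.mem_product, Set.Finite.mem_toFinset] at h h'
    exact hne (Prod.ext (h.1.1.symm.trans h'.1.1) (h.2.1.symm.trans h'.2.1))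

theorem two_mul_add_one_mul_catalan (m : ℕ) :
    (2 * m + 1) * catalan m = (2 * m + 1).choose (m + 2) + catalan (m + 1) := by
  have hcatalan := succ_mul_catalan_eq_centralBinom m
  have hcatalan_succ := succ_mul_catalan_eq_centralBinom (m + 1)
  have hcentral := Nat.succ_mul_centralBinom_succ m
  have hright := Nat.choose_succ_right_eq (2 * m + 1) (m + 1)
  have hdiag := Nat.add_one_mul_choose_eq (2 * m) m
  rw [← Nat.centralBinom_eq_two_mul_choose] at hdiag
  rw [show 2 * m + 1 - (m + 1) = m by omega] at hright
  refine Nat.eq_of_mul_eq_mul_left (show 0 < (m + 1) * (m + 2) by positivity) ?_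
  linear_combination (2 * m + 1) * (m + 2) * hcatalan - (m + 1) * hcatalan_succ - hcentral
    - (m + 1) * hright + m * hdiag

theorem valleyMarkings_dyckSet_succ (m : ℕ) : valleyMarkings (DyckSet (m + 1)) =
    dyckSplittings m \ {v | v.1.count true = v.1.count false} := by
  ext ⟨A, B⟩
  exact isDyckWord_insert_valley

theorem valleyMarkings_dyckSet_zero : valleyMarkings (DyckSet 0) = ∅ :=
  Set.eq_empty_of_forall_notMem fun v hv => by simpa using IsDyckWord.length_eq hv

theorem ncard_valleyMarkings_dyckSet (n : ℕ) :
    (valleyMarkings (DyckSet n)).ncard = (2 * n - 1).choose (n + 1) := by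
  cases n with
  | zero => simp [valleyMarkings_dyckSet_zero]
  | succ m =>
    have hsplit := Set.ncard_inter_add_ncard_sdiff_eq_ncard (dyckSplittings m)
      {v | v.1.count true = v.1.count false} (finite_dyckSplittings m)
    rw [ncard_dyckSplittings_inter_balanced, ncard_dyckSplittings, two_mul_add_one_mul_catalan,
      ← valleyMarkings_dyckSet_succ] at hsplit
    change (valleyMarkings (DyckSet (m + 1))).ncard = (2 * m + 1).choose (m + 2)
    omega

end Counting

section Covers

variable {n : ℕ} {δ : ℕ → ℤ}

theorem ncard_upperCovers (hδ : 0 ≤ δ) (hδn : IsTailBounded n δ) {P : List Bool}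
    (hP : IsDyckWord n P) : {Q | CovIn (DyckSet n) (altLE δ) P Q}.ncard = valleys P := by
  have himage : {pq : List Bool × List Bool | pq.1 ∈ ({P} : Set _) ∧ DeltaRot δ pq.1 pq.2} =
      Prod.mk P '' {Q | CovIn (DyckSet n) (altLE δ) P Q} := by
    ext ⟨R, Q⟩
    constructor
    · rintro ⟨rfl, hrot⟩
      exact ⟨Q, (covIn_iff_deltaRot hδ).2 ⟨hP, hrot⟩, rfl⟩
    · rintro ⟨Q, hcov, heq⟩
      obtain ⟨rfl, rfl⟩ := Prod.ext_iff.1 heq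
      exact ⟨rfl, ((covIn_iff_deltaRot hδ).1 hcov).2⟩
  rw [← ncard_valleyMarkings_singleton, ncard_valleyMarkings_eq_rotations hδ hδn (by simpa),
    ← ncard_deltaRot_eq_rotations, himage,
    Set.ncard_image_of_injective _ (Prod.mk_right_injective P)]

theorem ncard_covIn (hδ : 0 ≤ δ) (hδn : IsTailBounded n δ) :
    {pq : List Bool × List Bool | CovIn (DyckSet n) (altLE δ) pq.1 pq.2}.ncard =
      (2 * n - 1).choose (n + 1) := by
  simp only [covIn_iff_deltaRot hδ]
  rw [← ncard_valleyMarkings_dyckSet, ncard_valleyMarkings_eq_rotations hδ hδn subset_rfl]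
  exact ncard_deltaRot_eq_rotations (S := DyckSet n)

end Covers

theorem stmt17_general (n : ℕ) (δ : ℕ → ℤ) (hδ : 0 ≤ δ) (hδn : IsTailBounded n δ) :
    (∀ P : List Bool, IsDyckWord n P →
      {Q : List Bool | CovIn (DyckSet n) (altLE δ) P Q}.ncard = valleys P) ∧
    (∀ δ' : ℕ → ℤ, 0 ≤ δ' → IsTailBounded n δ' →
      {pq : List Bool × List Bool | CovIn (DyckSet n) (altLE δ) pq.1 pq.2}.ncard =
        {pq : List Bool × List Bool | CovIn (DyckSet n) (altLE δ') pq.1 pq.2}.ncard) ∧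
    {pq : List Bool × List Bool | CovIn (DyckSet n) (altLE δ) pq.1 pq.2}.ncard
      = (2 * n - 1).choose (n + 1) :=
  ⟨fun _ => ncard_upperCovers hδ hδn,
    fun _ hδ' hδn' => (ncard_covIn hδ hδn).trans (ncard_covIn hδ' hδn').symm, ncard_covIn hδ hδn⟩

/-- in `Tam^δ_n` the number of upper covers of a Dyck word `P` is its
number of valleys; hence all alt-Tamari posets of size `n` have the same number of
covering relations, namely `binom (2n-1) (n-2)` (written in the symmetric form
`binom (2n-1) (n+1)` to avoid the truncation of natural subtraction). -/
theorem stmt17 (n : ℕ) (δ : ℕ → ℤ) (hδ : IsIncFun δ) :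
    (∀ P : List Bool, IsDyckWord n P →
      {Q : List Bool | CovIn (DyckSet n) (altLE δ) P Q}.ncard = valleys P) ∧
    (∀ δ' : ℕ → ℤ, IsIncFun δ' →
      {pq : List Bool × List Bool | CovIn (DyckSet n) (altLE δ) pq.1 pq.2}.ncard =
        {pq : List Bool × List Bool | CovIn (DyckSet n) (altLE δ') pq.1 pq.2}.ncard) ∧
    {pq : List Bool × List Bool | CovIn (DyckSet n) (altLE δ) pq.1 pq.2}.ncard
      = (2 * n - 1).choose (n + 1) := by
  obtain ⟨hcovers, hsame, hcount⟩ := stmt17_general n δ hδ.nonneg (hδ.isTailBounded n)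
  exact ⟨hcovers, fun δ' hδ' => hsame δ' hδ'.nonneg (hδ'.isTailBounded n), hcount⟩
end

section
/- Let n ≥ 1, k ≥ 2, and let δ be an increment function of size n. The right intervals of height k in the alt-Tamari poset Tam^δ_n are in bijection with sequences (P_0, P_1, …, P_k) of Dyck words, where P_0 is marked at one of its down steps and the sizes of P_0, …, P_k add up to n − k; in particular, the number of right intervals of height k in Tam^δ_n is binomial(2n−k, n+1), independently of δ. -/
/-!
Write a right interval as `P = A d C_1 ⋯ C_k B` with `δ`-excursions `C_j = u w_j`. Hoisting the `k`
initial up steps to the front gives `A d u^k w_1 ⋯ w_k B`, and this is a bijection onto the pairs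
`(A, R)` for which `A d u^k R` is a Dyck word, a set that does not involve `δ`. Indeed, as `δ` is
at most `1`, a first passage to `δ`-altitude `0` loses at least as much `δ`-altitude as height.
Hence each `w_j` loses no more height than the up step `u` gains, and moving that step back keeps
the path nonnegative. Conversely `δ` is nonnegative, so only down steps lower the `δ`-altitude, each
by `1`: it must vanish before the path can become negative, so `w_1, …, w_k` can be read off from
`R`.

Every `δ` may therefore be replaced by `δ = 1`, for which `C_j = u D_j d` with `D_j` a Dyck word.
Then `A d B`, marked at the displayed `d`, together with `D_1, …, D_k` is the sequence sought.

The pairs `(A, R)` are counted by their first letter, for paths starting at an arbitrary height.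
-/

section DyckFrom

lemma forall_prefix_cons {α : Type*} {x : α} {l : List α} {C : List α → Prop} :
    (∀ p, p <+: x :: l → C p) ↔ C [] ∧ ∀ p, p <+: l → C (x :: p) := by
  simp only [List.prefix_cons_iff]
  grind

/-- `w` is a path from height `h` to height `0` that stays nonnegative, so that Dyck paths are the
case `h = 0`. -/
def IsDyckFrom (h : ℕ) (w : List Bool) : Prop :=
  w.count false = w.count true + h ∧ ∀ p, p <+: w → p.count false ≤ p.count true + h

lemma isDyckPath_iff_isDyckFrom {w : List Bool} : IsDyckPath w ↔ IsDyckFrom 0 w := by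
  simp [IsDyckPath, IsDyckFrom, eq_comm]

lemma isDyckWord_iff_isDyckFrom {n : ℕ} {w : List Bool} :
    IsDyckWord n w ↔ IsDyckFrom 0 w ∧ w.count true = n := by
  grind [IsDyckWord, IsDyckFrom]

@[simp] lemma isDyckFrom_nil {h : ℕ} : IsDyckFrom h [] ↔ h = 0 := by
  simp +contextual [IsDyckFrom, eq_comm]

@[simp] lemma isDyckFrom_true_cons {h : ℕ} {w : List Bool} :
    IsDyckFrom h (true :: w) ↔ IsDyckFrom (h + 1) w := by
  simp [IsDyckFrom, forall_prefix_cons, add_right_comm _ 1, ← add_assoc]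

@[simp] lemma isDyckFrom_succ_false_cons {h : ℕ} {w : List Bool} :
    IsDyckFrom (h + 1) (false :: w) ↔ IsDyckFrom h w := by
  simp [IsDyckFrom, forall_prefix_cons, ← add_assoc]

@[simp] lemma not_isDyckFrom_zero_false_cons {w : List Bool} : ¬ IsDyckFrom 0 (false :: w) :=
  fun H ↦ by simpa using H.2 [false] (by simp)

lemma isDyckFrom_replicate_true_append {h k : ℕ} {w : List Bool} :
    IsDyckFrom h (List.replicate k true ++ w) ↔ IsDyckFrom (h + k) w := by
  induction k generalizing h with
  | zero => simp
  | succ k ih => simp [List.replicate_succ, ih, add_right_comm h 1 k, ← add_assoc]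

lemma IsDyckFrom.exists_of_append {h : ℕ} {u v : List Bool} (hu : IsDyckFrom h (u ++ v)) :
    ∃ h', IsDyckFrom h' v := by
  induction u generalizing h with
  | nil => exact ⟨h, hu⟩
  | cons x u ih =>
    cases x <;> obtain _ | h := h
    all_goals simp only [List.cons_append, isDyckFrom_true_cons, isDyckFrom_succ_false_cons,
      not_isDyckFrom_zero_false_cons] at hu
    all_goals exact ih hu

lemma IsDyckFrom.append_mono {v v' : List Bool} (H : ∀ h, IsDyckFrom h v → IsDyckFrom h v')
    {h : ℕ} {u : List Bool} (hu : IsDyckFrom h (u ++ v)) : IsDyckFrom h (u ++ v') := by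
  induction u generalizing h with
  | nil => exact H h hu
  | cons x u ih => cases x <;> cases h <;> simp_all

lemma isDyckFrom_append_congr {v v' : List Bool} (H : ∀ h, IsDyckFrom h v ↔ IsDyckFrom h v')
    {h : ℕ} {u : List Bool} : IsDyckFrom h (u ++ v) ↔ IsDyckFrom h (u ++ v') :=
  ⟨.append_mono fun h ↦ (H h).1, .append_mono fun h ↦ (H h).2⟩

lemma IsDyckFrom.move_false_right {h : ℕ} {v w : List Bool} (H : IsDyckFrom h (false :: (v ++ w))) :
    IsDyckFrom h (v ++ false :: w) := by
  induction v generalizing h with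
  | nil => exact H
  | cons x v ih => cases x <;> obtain _ | _ | h := h <;> simp_all

end DyckFrom

section FirstPassage

variable {δ : ℕ → ℤ} {i h : ℕ} {a : ℤ} {w : List Bool}

/-- Read from `δ`-altitude `a`, the word `w` reaches `δ`-altitude `0` at its end and not before.
The index `i` is the number of up steps preceding `w`: the first up step of `w` is `u_{i+1}`. -/
def IsFirstPassage (δ : ℕ → ℤ) : ℕ → ℤ → List Bool → Prop
  | _, a, [] => a = 0
  | i, a, true :: w => a ≠ 0 ∧ IsFirstPassage δ (i + 1) (a + δ (i + 1)) w
  | i, a, false :: w => a ≠ 0 ∧ IsFirstPassage δ i (a - 1) w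

namespace IsFirstPassage

lemma eq_of_append_eq {w' v v' : List Bool} (hw : IsFirstPassage δ i a w)
    (hw' : IsFirstPassage δ i a w') (e : w ++ v = w' ++ v') : w = w' := by
  induction w generalizing i a w' with
  | nil => cases w' with
    | nil => rfl
    | cons y w' => cases y <;> exact (hw'.1 hw).elim
  | cons x w ih => cases w' with
    | nil => cases x <;> exact (hw.1 hw').elim
    | cons y w' =>
      obtain ⟨rfl, htail⟩ : x = y ∧ w ++ v = w' ++ v' := by simpa using e
      cases x <;> rw [ih hw.2 hw'.2 htail]

lemma exists_append (hδ : IsIncFun δ) (ha : 0 ≤ a) (hah : a ≤ h) (hw : IsDyckFrom h w) :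
    ∃ v v', w = v ++ v' ∧ IsFirstPassage δ i a v := by
  induction w generalizing i a h with
  | nil => exact ⟨[], [], rfl, by simp_all [IsFirstPassage]; omega⟩
  | cons x w ih =>
    obtain rfl | ha0 := eq_or_ne a 0
    · exact ⟨[], x :: w, rfl, rfl⟩
    cases x with
    | true =>
      obtain ⟨v, v', rfl, hv⟩ := ih (i := i + 1) (a := a + δ (i + 1))
        (by grind [hδ (i + 1)]) (by grind [hδ (i + 1)]) (isDyckFrom_true_cons.1 hw)
      exact ⟨true :: v, v', rfl, ha0, hv⟩
    | false =>
      obtain _ | h := h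
      · omega
      obtain ⟨v, v', rfl, hv⟩ := ih (i := i) (a := a - 1) (by omega) (by omega)
        (isDyckFrom_succ_false_cons.1 hw)
      exact ⟨false :: v, v', rfl, ha0, hv⟩

lemma count_false_le (hδ : IsIncFun δ) (hw : IsFirstPassage δ i a w) :
    (w.count false : ℤ) ≤ w.count true + a := by
  induction w generalizing i a with
  | nil => simp_all [IsFirstPassage]
  | cons x w ih =>
    cases x with
    | true => grind [ih hw.2, hδ (i + 1)]
    | false => grind [ih hw.2]

lemma isDyckFrom_append_iff (hδ : IsIncFun δ) {h' : ℕ} {v : List Bool}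
    (hw : IsFirstPassage δ i a w) (ha : 0 ≤ a) (hah : a ≤ h)
    (hh : h + w.count true = h' + w.count false) :
    IsDyckFrom h (w ++ v) ↔ IsDyckFrom h' v := by
  induction w generalizing i a h with
  | nil => simp_all
  | cons x w ih =>
    cases x with
    | true =>
      obtain ⟨ha0, hw⟩ := hw
      rw [List.cons_append, isDyckFrom_true_cons]
      exact ih hw (by grind [hδ (i + 1)]) (by grind [hδ (i + 1)]) (by grind)
    | false =>
      obtain ⟨ha0, hw⟩ := hw
      obtain _ | h := h
      · omega
      rw [List.cons_append, isDyckFrom_succ_false_cons]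
      exact ih hw (by omega) (by omega) (by grind)

end IsFirstPassage

end FirstPassage

section Excursion

variable {δ : ℕ → ℤ}

lemma elev_append_cons (x : Bool) (u v : List Bool) (m : ℕ) :
    elev δ (u ++ x :: v) u.length (u.length + (m + 1)) =
      (if x then δ (u.count true + 1) else -1) +
        elev δ ((u ++ [x]) ++ v) (u ++ [x]).length ((u ++ [x]).length + m) := by
  have hstep : stepVal δ (u ++ x :: v) u.length = if x then δ (u.count true + 1) else -1 := by
    cases x <;> simp [stepVal, List.take_append, List.take_of_length_le]
  rw [elev, Finset.sum_eq_sum_Ico_succ_bot (by omega), hstep, elev, List.length_append,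
    List.length_singleton, List.append_assoc, List.singleton_append, Nat.add_assoc, Nat.add_comm 1]

lemma isFirstPassage_iff_elev {a : ℤ} {u w v : List Bool} :
    IsFirstPassage δ (u.count true) a w ↔
      a + elev δ (u ++ (w ++ v)) u.length (u.length + w.length) = 0 ∧
        ∀ m < w.length, a + elev δ (u ++ (w ++ v)) u.length (u.length + m) ≠ 0 := by
  induction w generalizing u a with
  | nil => simp [IsFirstPassage, elev]
  | cons x w ih =>
    have hstep (m : ℕ) : a + elev δ (u ++ x :: (w ++ v)) u.length (u.length + (m + 1)) =
        (a + if x then δ (u.count true + 1) else -1) +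
          elev δ ((u ++ [x]) ++ (w ++ v)) (u ++ [x]).length ((u ++ [x]).length + m) := by
      rw [elev_append_cons, add_assoc]
    have hzero : elev δ (u ++ x :: (w ++ v)) u.length u.length = 0 := by simp [elev]
    simp only [List.cons_append, List.length_cons, Nat.forall_lt_succ_left, hzero, hstep,
      add_zero, and_left_comm (b := a ≠ 0), ← ih]
    cases x <;> simp [IsFirstPassage, sub_eq_add_neg]

lemma isDeltaExcAt_iff {u v C : List Bool} :
    IsDeltaExcAt δ (u ++ v) u.length C ↔ C <+: v ∧ ∃ w, C = true :: w ∧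
      IsFirstPassage δ (u.count true + 1) (δ (u.count true + 1)) w := by
  have hpassage (w v : List Bool) :
      IsFirstPassage δ (u.count true + 1) (δ (u.count true + 1)) w ↔
        elev δ (u ++ true :: (w ++ v)) u.length (u.length + (w.length + 1)) = 0 ∧
          ∀ m < w.length, elev δ (u ++ true :: (w ++ v)) u.length (u.length + (m + 1)) ≠ 0 := by
    simpa only [elev_append_cons, List.count_append, List.count_singleton_self, if_true]
      using isFirstPassage_iff_elev (u := u ++ [true])
  constructor
  · rintro ⟨hup, m, hm, hlen, rfl, helev, hmin⟩
    obtain ⟨m, rfl⟩ := Nat.exists_eq_add_one_of_ne_zero hm.ne'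
    obtain _ | ⟨x, v⟩ := v
    · simp at hlen
    obtain rfl : x = true := by simpa using hup
    rw [List.drop_left, List.take_succ_cons]
    refine ⟨by simp [List.take_prefix], _, rfl, (hpassage _ (v.drop m)).2 ?_⟩
    have hlen' : (v.take m).length = m := by simp at hlen ⊢; omega
    rw [List.take_append_drop, hlen']
    exact ⟨helev, fun m' hm' ↦ hmin (m' + 1) (by omega) (by omega)⟩
  · rintro ⟨⟨v, rfl⟩, w, rfl, hw⟩
    obtain ⟨helev, hmin⟩ := (hpassage w v).1 hw
    refine ⟨by simp, w.length + 1, by omega, by simp, by simp, helev, fun m hm hmw ↦ ?_⟩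
    obtain ⟨m, rfl⟩ := Nat.exists_eq_add_one_of_ne_zero hm.ne'
    exact hmin m (by omega)

/-- The words `u w_1, …, u w_k` obtained from `l = [w_1, …, w_k]` by restoring the initial up steps
are consecutive `δ`-excursions in a word with `i` up steps before them. -/
def IsExcursionTails (δ : ℕ → ℤ) : ℕ → List (List Bool) → Prop
  | _, [] => True
  | i, w :: l => IsFirstPassage δ (i + 1) (δ (i + 1)) w ∧
      IsExcursionTails δ (i + 1 + w.count true) l

lemma forall_isDeltaExcAt_iff {u v : List Bool} {Cs : List (List Bool)} :
    (∀ j < Cs.length, IsDeltaExcAt δ (u ++ (Cs.flatten ++ v))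
        (u.length + (Cs.take j).flatten.length) (Cs.getD j [])) ↔
      ∃ l, Cs = l.map (List.cons true) ∧ IsExcursionTails δ (u.count true) l := by
  induction Cs generalizing u with
  | nil => simp [IsExcursionTails]
  | cons C Cs ih =>
    have hhead : IsDeltaExcAt δ (u ++ (C ++ (Cs.flatten ++ v))) u.length C ↔ ∃ w, C = true :: w ∧
        IsFirstPassage δ (u.count true + 1) (δ (u.count true + 1)) w := by
      simp [isDeltaExcAt_iff]
    have htail := ih (u := u ++ C)
    simp only [List.append_assoc, List.length_append, add_assoc, List.count_append] at htail
    simp only [List.length_cons, Nat.forall_lt_succ_left, List.take_zero, List.flatten_nil,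
      List.length_nil, List.getD_cons_zero, List.flatten_cons, List.take_succ_cons,
      List.getD_cons_succ, List.length_append, List.append_assoc, add_zero, hhead, htail]
    constructor
    · rintro ⟨⟨w, rfl, hw⟩, l, rfl, hl⟩
      exact ⟨w :: l, rfl, hw, by simpa [add_assoc, add_comm 1] using hl⟩
    · rintro ⟨_ | ⟨w, l⟩, hl, hw⟩
      · simp at hl
      obtain ⟨rfl, rfl⟩ := List.cons.inj hl
      exact ⟨⟨w, rfl, hw.1⟩, l, rfl, by simpa [add_assoc, add_comm 1] using hw.2⟩

namespace IsExcursionTails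

variable {i h : ℕ} {l : List (List Bool)}

lemma eq_of_flatten_append_eq {l' : List (List Bool)} {v v' : List Bool}
    (hl : IsExcursionTails δ i l) (hl' : IsExcursionTails δ i l') (hlen : l.length = l'.length)
    (e : l.flatten ++ v = l'.flatten ++ v') : l = l' := by
  induction l generalizing i l' with
  | nil => exact (List.length_eq_zero_iff.1 hlen.symm).symm
  | cons w l ih =>
    obtain _ | ⟨w', l'⟩ := l'
    · simp at hlen
    simp only [List.flatten_cons, List.append_assoc] at e
    obtain rfl : w = w' := hl.1.eq_of_append_eq hl'.1 e
    rw [ih hl.2 hl'.2 (by simpa using hlen) (List.append_cancel_left e)]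

lemma eq_of_map_flatten_append_eq {l' : List (List Bool)} {v v' : List Bool}
    (hl : IsExcursionTails δ i l) (hl' : IsExcursionTails δ i l') (hlen : l.length = l'.length)
    (e : (l.map (List.cons true)).flatten ++ v = (l'.map (List.cons true)).flatten ++ v') :
    l = l' := by
  induction l generalizing i l' with
  | nil => exact (List.length_eq_zero_iff.1 hlen.symm).symm
  | cons w l ih =>
    obtain _ | ⟨w', l'⟩ := l'
    · simp at hlen
    simp only [List.map_cons, List.flatten_cons, List.append_assoc, List.cons_append,
      List.cons.injEq, true_and] at e
    obtain rfl : w = w' := hl.1.eq_of_append_eq hl'.1 e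
    rw [ih hl.2 hl'.2 (by simpa using hlen) (List.append_cancel_left e)]

lemma exists_flatten_append (hδ : IsIncFun δ) {k : ℕ} {w : List Bool} (hk : k ≤ h)
    (hw : IsDyckFrom h w) :
    ∃ l v, l.length = k ∧ w = l.flatten ++ v ∧ IsExcursionTails δ i l := by
  induction k generalizing i h w with
  | zero => exact ⟨[], w, rfl, rfl, trivial⟩
  | succ k ih =>
    have hδi := hδ (i + 1)
    obtain ⟨w, v, rfl, hw'⟩ := IsFirstPassage.exists_append (i := i + 1) (a := δ (i + 1)) hδ
      (by omega) (by omega) hw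
    have hdrop := hw'.count_false_le hδ
    obtain ⟨h', hh'⟩ : ∃ h', h + w.count true = h' + w.count false :=
      ⟨h + w.count true - w.count false, by omega⟩
    obtain ⟨l, v, rfl, rfl, hl⟩ := ih (i := i + 1 + w.count true) (by omega)
      ((hw'.isDyckFrom_append_iff hδ (by omega) (by omega) hh').1 hw)
    exact ⟨w :: l, v, rfl, by simp, hw', hl⟩

lemma isDyckFrom_map_flatten_append_iff (hδ : IsIncFun δ) {v : List Bool}
    (hl : IsExcursionTails δ i l) :
    IsDyckFrom h ((l.map (List.cons true)).flatten ++ v) ↔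
      IsDyckFrom (h + l.length) (l.flatten ++ v) := by
  induction l generalizing i h with
  | nil => rfl
  | cons w l ih =>
    have hδi := hδ (i + 1)
    have hdrop := hl.1.count_false_le hδ
    obtain ⟨h', hh'⟩ : ∃ h', h + 1 + w.count true = h' + w.count false :=
      ⟨h + 1 + w.count true - w.count false, by omega⟩
    simp only [List.map_cons, List.flatten_cons, List.cons_append, List.append_assoc,
      isDyckFrom_true_cons, List.length_cons]
    rw [hl.1.isDyckFrom_append_iff hδ (by omega) (by omega) hh', ih hl.2,
      hl.1.isDyckFrom_append_iff hδ (h' := h' + l.length) (by omega) (by omega) (by omega)]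

end IsExcursionTails

end Excursion

section Counting

lemma ncard_eq_ncard_cons_add_ncard_cons {S : Set (List Bool)} (hS : S.Finite) (hnil : [] ∉ S) :
    S.ncard = {w | true :: w ∈ S}.ncard + {w | false :: w ∈ S}.ncard := by
  have hsplit : S = List.cons true '' {w | true :: w ∈ S} ∪
      List.cons false '' {w | false :: w ∈ S} := by
    ext (_ | ⟨_ | _, w⟩) <;> simp [hnil]
  have hfin := Set.finite_union.1 (hsplit ▸ hS)
  conv_lhs => rw [hsplit]
  rw [Set.ncard_union_eq ?_ hfin.1 hfin.2, Set.ncard_image_of_injective _ List.cons_injective,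
    Set.ncard_image_of_injective _ List.cons_injective]
  simp [Set.disjoint_left]

lemma ncard_eq_ncard_nil_add_ncard_cons_add_ncard_cons {β : Type*} {S : Set (List Bool × β)}
    (hS : S.Finite) :
    S.ncard = {b | ([], b) ∈ S}.ncard +
      ((Prod.map (List.cons true) id ⁻¹' S).ncard +
        (Prod.map (List.cons false) id ⁻¹' S).ncard) := by
  have hinj (x : Bool) : Function.Injective (Prod.map (List.cons x) id : List Bool × β → _) :=
    List.cons_injective.prodMap Function.injective_id
  have hsplit : S = Prod.mk [] '' {b | ([], b) ∈ S} ∪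
      (Prod.map (List.cons true) id '' (Prod.map (List.cons true) id ⁻¹' S) ∪
        Prod.map (List.cons false) id '' (Prod.map (List.cons false) id ⁻¹' S)) := by
    ext ⟨_ | ⟨_ | _, w⟩, b⟩ <;> simp
  have hfin := Set.finite_union.1 (hsplit ▸ hS)
  have hfin' := Set.finite_union.1 hfin.2
  conv_lhs => rw [hsplit]
  rw [Set.ncard_union_eq ?_ hfin.1 hfin.2, Set.ncard_union_eq ?_ hfin'.1 hfin'.2,
    Set.ncard_image_of_injective _ (Prod.mk_right_injective []),
    Set.ncard_image_of_injective _ (hinj _), Set.ncard_image_of_injective _ (hinj _)]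
  all_goals
    rw [Set.disjoint_left]
    grind

/-- The nonnegative paths from height `h` to height `0` with `m` up steps. -/
def dyckPathsFrom (h m : ℕ) : Set (List Bool) :=
  {w | IsDyckFrom h w ∧ w.count true = m}

lemma IsDyckFrom.length_eq {h : ℕ} {w : List Bool} (hw : IsDyckFrom h w) :
    w.length = 2 * w.count true + h := by
  have := hw.1
  have := List.count_false_add_count_true w
  omega

lemma finite_dyckPathsFrom (h m : ℕ) : (dyckPathsFrom h m).Finite :=
  (List.finite_length_eq Bool (2 * m + h)).subset fun _ ⟨hw, hm⟩ ↦ hm ▸ hw.length_eq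

-- The closed form is the reflection principle: the subtracted term counts the paths from height
-- `h` to height `0` that go below `0`.
lemma ncard_dyckPathsFrom_add_choose (h m : ℕ) :
    (dyckPathsFrom h m).ncard + (2 * m + h).choose (m + h + 1) = (2 * m + h).choose (m + h) := by
  induction m generalizing h with
  | zero =>
    induction h with
    | zero =>
      have : dyckPathsFrom 0 0 = {[]} := by
        ext (_ | ⟨_ | _, w⟩) <;> simp [dyckPathsFrom]
      simp [this]
    | succ h ih =>
      rw [ncard_eq_ncard_cons_add_ncard_cons (finite_dyckPathsFrom _ _) (by simp [dyckPathsFrom])]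
      simpa [dyckPathsFrom] using ih
  | succ m ihm =>
    have hup (h : ℕ) : {w | true :: w ∈ dyckPathsFrom h (m + 1)} = dyckPathsFrom (h + 1) m := by
      simp [dyckPathsFrom]
    induction h with
    | zero =>
      have hdown : {w | false :: w ∈ dyckPathsFrom 0 (m + 1)} = ∅ := by simp [dyckPathsFrom]
      rw [ncard_eq_ncard_cons_add_ncard_cons (finite_dyckPathsFrom _ _) (by simp [dyckPathsFrom]),
        hup, hdown, Set.ncard_empty]
      have := ihm 1
      have hsymm : (2 * m + 1).choose m = (2 * m + 1).choose (m + 1) :=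
        Nat.choose_symm_of_eq_add (by omega)
      grind [Nat.choose_succ_succ']
    | succ h ih =>
      have hdown : {w | false :: w ∈ dyckPathsFrom (h + 1) (m + 1)} = dyckPathsFrom h (m + 1) := by
        simp [dyckPathsFrom]
      rw [ncard_eq_ncard_cons_add_ncard_cons (finite_dyckPathsFrom _ _) (by simp [dyckPathsFrom]),
        hup, hdown]
      have := ihm (h + 2)
      grind [Nat.choose_succ_succ']

/-- The pairs `(A, R)` such that `A d u^k R` is a nonnegative path from height `h` to height `0`
and `A R` has `m` up steps. For `h = 0` they encode the right intervals of height `k` for `δ = 0`,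
all of whose excursions are single up steps. -/
def markedPathsFrom (k h m : ℕ) : Set (List Bool × List Bool) :=
  {p | IsDyckFrom h (p.1 ++ false :: (List.replicate k true ++ p.2)) ∧
    p.1.count true + p.2.count true = m}

lemma finite_markedPathsFrom (k h m : ℕ) : (markedPathsFrom k h m).Finite := by
  refine ((List.finite_length_le Bool (2 * (m + k) + h)).prod
    (List.finite_length_le Bool (2 * (m + k) + h))).subset ?_
  rintro ⟨u, v⟩ ⟨hp, rfl⟩
  have := hp.length_eq
  simp at this ⊢
  omega

section Recursion

variable (k h m : ℕ)

lemma setOf_nil_mem_markedPathsFrom_succ :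
    {v | ([], v) ∈ markedPathsFrom k (h + 1) m} = dyckPathsFrom (h + k) m := by
  simp [markedPathsFrom, dyckPathsFrom, isDyckFrom_replicate_true_append]

lemma preimage_cons_true_markedPathsFrom_succ :
    Prod.map (List.cons true) id ⁻¹' markedPathsFrom k h (m + 1) = markedPathsFrom k (h + 1) m := by
  simp [markedPathsFrom, add_right_comm _ 1]

lemma preimage_cons_false_markedPathsFrom_succ :
    Prod.map (List.cons false) id ⁻¹' markedPathsFrom k (h + 1) m = markedPathsFrom k h m := by
  simp [markedPathsFrom]

lemma ncard_markedPathsFrom_zero_zero : (markedPathsFrom k 0 0).ncard = 0 := by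
  rw [ncard_eq_ncard_nil_add_ncard_cons_add_ncard_cons (finite_markedPathsFrom k 0 0)]
  simp [markedPathsFrom]

lemma ncard_markedPathsFrom_zero_succ :
    (markedPathsFrom k 0 (m + 1)).ncard = (markedPathsFrom k 1 m).ncard := by
  rw [ncard_eq_ncard_nil_add_ncard_cons_add_ncard_cons (finite_markedPathsFrom k 0 (m + 1)),
    preimage_cons_true_markedPathsFrom_succ]
  simp [markedPathsFrom]

lemma ncard_markedPathsFrom_succ_zero : (markedPathsFrom k (h + 1) 0).ncard =
    (dyckPathsFrom (h + k) 0).ncard + (markedPathsFrom k h 0).ncard := by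
  rw [ncard_eq_ncard_nil_add_ncard_cons_add_ncard_cons (finite_markedPathsFrom k (h + 1) 0),
    setOf_nil_mem_markedPathsFrom_succ, preimage_cons_false_markedPathsFrom_succ]
  simp [markedPathsFrom]

lemma ncard_markedPathsFrom_succ_succ : (markedPathsFrom k (h + 1) (m + 1)).ncard =
    (dyckPathsFrom (h + k) (m + 1)).ncard +
      ((markedPathsFrom k (h + 2) m).ncard + (markedPathsFrom k h (m + 1)).ncard) := by
  rw [ncard_eq_ncard_nil_add_ncard_cons_add_ncard_cons (finite_markedPathsFrom k (h + 1) (m + 1)),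
    setOf_nil_mem_markedPathsFrom_succ, preimage_cons_true_markedPathsFrom_succ,
    preimage_cons_false_markedPathsFrom_succ]

theorem ncard_markedPathsFrom : (markedPathsFrom k h m).ncard =
    (2 * m + (h + k)).choose (m + (h + k) + 1) +
      h * (2 * m + (h + k)).choose (m + (h + k)) := by
  induction m generalizing h with
  | zero =>
    induction h with
    | zero => simp [ncard_markedPathsFrom_zero_zero]
    | succ h ih =>
      have hdyck := ncard_dyckPathsFrom_add_choose (h + k) 0
      rw [ncard_markedPathsFrom_succ_zero, ih]
      grind [Nat.choose_self, Nat.choose_succ_self]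
  | succ m ihm =>
    induction h with
    | zero =>
      rw [ncard_markedPathsFrom_zero_succ, ihm]
      grind [Nat.choose_succ_succ']
    | succ h ih =>
      have hdyck := ncard_dyckPathsFrom_add_choose (h + k) (m + 1)
      rw [ncard_markedPathsFrom_succ_succ, ihm, ih]
      grind [Nat.choose_succ_succ']

end Recursion

end Counting

section RightIntervals

/-- The right intervals `(P, Q)` of height `k` in `Tam^δ_n`; those of height `1` are the
`δ`-rotations. -/
def rightIntervals (δ : ℕ → ℤ) (n k : ℕ) : Set (List Bool × List Bool) :=
  {pq | IsDyckWord n pq.1 ∧ IsDyckWord n pq.2 ∧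
    ∃ (A B : List Bool) (Cs : List (List Bool)), Cs.length = k ∧
      pq.1 = A ++ false :: (Cs.flatten ++ B) ∧
      pq.2 = A ++ (Cs.flatten ++ false :: B) ∧
      ∀ j < k, IsDeltaExcAt δ pq.1 (A.length + 1 + ((Cs.take j).flatten).length) (Cs.getD j [])}

/-- The triples `(A, [w_1, …, w_k], B)` such that `A d C_1 ⋯ C_k B` with `C_j = u w_j` is a Dyck
word of size `n` in which every `C_j` is a `δ`-excursion. -/
def excursionFactorizations (δ : ℕ → ℤ) (n k : ℕ) :
    Set (List Bool × List (List Bool) × List Bool) :=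
  {(A, l, B) | l.length = k ∧ IsExcursionTails δ (A.count true) l ∧
    IsDyckWord n (A ++ false :: ((l.map (List.cons true)).flatten ++ B))}

lemma eq_of_append_cons_eq {α : Type*} {x y : α} (hxy : x ≠ y) {l l' v v' w w' : List α}
    (hx : l ++ x :: v = l' ++ x :: v') (hy : l ++ y :: w = l' ++ y :: w') : l = l' := by
  induction l generalizing l' with
  | nil => cases l' <;> simp_all
  | cons a l ih => cases l' <;> simp_all

lemma mem_excursionFactorizations_iff {δ : ℕ → ℤ} {n k : ℕ} {A B : List Bool}
    {l : List (List Bool)} : (A, l, B) ∈ excursionFactorizations δ n k ↔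
      (l.length = k ∧ IsExcursionTails δ (A.count true) l) ∧
        IsDyckFrom 0 (A ++ false :: ((l.map (List.cons true)).flatten ++ B)) ∧
          A.count true + (l.flatten ++ B).count true + k = n := by
  have hcount : ((l.map (List.cons true)).flatten).count true =
      l.flatten.count true + l.length := by
    simp [List.count_flatten, Function.comp_def, List.sum_map_add]
  simp only [excursionFactorizations, Set.mem_ofPred_eq, isDyckWord_iff_isDyckFrom,
    List.count_append, List.count_cons, hcount]
  grind

theorem bijOn_excursionFactorizations_rightIntervals (δ : ℕ → ℤ) (n : ℕ) {k : ℕ} (hk : k ≠ 0) :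
    Set.BijOn
      (fun (A, l, B) ↦ (A ++ false :: ((l.map (List.cons true)).flatten ++ B),
        A ++ ((l.map (List.cons true)).flatten ++ false :: B)))
      (excursionFactorizations δ n k) (rightIntervals δ n k) := by
  refine ⟨?_, ?_, ?_⟩
  · rintro ⟨A, l, B⟩ ⟨rfl, hl, hP⟩
    refine ⟨hP, ?_, A, B, _, List.length_map _, rfl, rfl, ?_⟩
    · rw [isDyckWord_iff_isDyckFrom] at hP ⊢
      exact ⟨hP.1.append_mono fun _ ↦ .move_false_right, by grind⟩
    · have hexc := forall_isDeltaExcAt_iff (δ := δ) (u := A ++ [false]) (v := B)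
        (Cs := l.map (List.cons true))
      simp only [List.length_map, List.append_assoc, List.singleton_append, List.length_append,
        List.length_singleton] at hexc
      exact hexc.2 ⟨l, rfl, by simpa using hl⟩
  · rintro ⟨A, l, B⟩ ⟨hlk, hl, -⟩ ⟨A', l', B'⟩ ⟨hlk', hl', -⟩ e
    obtain ⟨eP, eQ⟩ := Prod.mk.inj e
    have hA : A = A' := by
      obtain ⟨w, t, rfl⟩ := List.exists_cons_of_length_pos (by omega : 0 < l.length)
      obtain ⟨w', t', rfl⟩ := List.exists_cons_of_length_pos (by omega : 0 < l'.length)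
      exact eq_of_append_cons_eq Bool.false_ne_true eP eQ
    subst hA
    have eE := (List.cons.inj (List.append_cancel_left eP)).2
    obtain rfl : l = l' := hl.eq_of_map_flatten_append_eq hl' (hlk.trans hlk'.symm) eE
    rw [List.append_cancel_left eE]
  · rintro ⟨_, _⟩ ⟨hP, -, A, B, Cs, rfl, rfl, rfl, hexc⟩
    have hexc' := forall_isDeltaExcAt_iff (δ := δ) (u := A ++ [false]) (v := B) (Cs := Cs)
    simp only [List.append_assoc, List.singleton_append, List.length_append,
      List.length_singleton] at hexc'
    obtain ⟨l, rfl, hl⟩ := hexc'.1 hexc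
    exact ⟨(A, l, B), ⟨by simp, by simpa using hl, hP⟩, rfl⟩

theorem bijOn_excursionFactorizations_markedPathsFrom {δ : ℕ → ℤ} (hδ : IsIncFun δ) (k m : ℕ) :
    Set.BijOn (fun (A, l, B) ↦ (A, l.flatten ++ B))
      (excursionFactorizations δ (m + k) k) (markedPathsFrom k 0 m) := by
  have hhoist {A B : List Bool} {l : List (List Bool)} (hl : IsExcursionTails δ (A.count true) l) :
      IsDyckFrom 0 (A ++ false :: ((l.map (List.cons true)).flatten ++ B)) ↔
        IsDyckFrom 0 (A ++ false :: (List.replicate l.length true ++ (l.flatten ++ B))) := by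
    refine isDyckFrom_append_congr fun h ↦ ?_
    cases h <;> simp [hl.isDyckFrom_map_flatten_append_iff hδ, isDyckFrom_replicate_true_append]
  refine ⟨?_, ?_, ?_⟩
  · rintro ⟨A, l, B⟩ hp
    obtain ⟨⟨rfl, hl⟩, hdyck, hcount⟩ := mem_excursionFactorizations_iff.1 hp
    exact ⟨(hhoist hl).1 hdyck, by simpa using hcount⟩
  · rintro ⟨A, l, B⟩ ⟨hlk, hl, -⟩ ⟨A', l', B'⟩ ⟨hlk', hl', -⟩ e
    obtain ⟨rfl, eR⟩ := Prod.mk.inj e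
    obtain rfl : l = l' := hl.eq_of_flatten_append_eq hl' (hlk.trans hlk'.symm) eR
    rw [List.append_cancel_left eR]
  · rintro ⟨A, R⟩ ⟨hdyck, hcount⟩
    obtain ⟨h, hR⟩ := (List.append_cons A false _ ▸ hdyck).exists_of_append
    rw [isDyckFrom_replicate_true_append] at hR
    obtain ⟨l, B, rfl, rfl, hl⟩ :=
      IsExcursionTails.exists_flatten_append (i := A.count true) hδ (Nat.le_add_left k h) hR
    exact ⟨(A, l, B), mem_excursionFactorizations_iff.2 ⟨⟨rfl, hl⟩, (hhoist hl).2 hdyck,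
      by rw [hcount]⟩, rfl⟩

end RightIntervals

section Tamari

lemma isFirstPassage_zero_iff {δ : ℕ → ℤ} {i : ℕ} {w : List Bool} :
    IsFirstPassage δ i 0 w ↔ w = [] := by
  obtain _ | ⟨_ | _, w⟩ := w <;> simp [IsFirstPassage]

lemma isFirstPassage_one_iff {i h : ℕ} {w : List Bool} :
    IsFirstPassage (fun _ ↦ 1) i (h + 1) w ↔ ∃ D, w = D ++ [false] ∧ IsDyckFrom h D := by
  induction w generalizing i h with
  | nil => simp [IsFirstPassage]; omega
  | cons x w ih =>
    have hsplit : (∃ D, x :: w = D ++ [false] ∧ IsDyckFrom h D) ↔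
        (h = 0 ∧ x = false ∧ w = []) ∨ ∃ D, w = D ++ [false] ∧ IsDyckFrom h (x :: D) := by
      constructor
      · rintro ⟨_ | ⟨y, D⟩, e, hD⟩ <;> simp_all
      · rintro (⟨rfl, rfl, rfl⟩ | ⟨D, rfl, hD⟩)
        · exact ⟨[], by simp⟩
        · exact ⟨x :: D, by simp [hD]⟩
    have hne : (h : ℤ) + 1 ≠ 0 := by omega
    rw [hsplit]
    cases x with
    | true => simpa [IsFirstPassage, hne] using ih (i := i + 1) (h := h + 1)
    | false =>
      rw [IsFirstPassage, and_iff_right hne, add_sub_cancel_right]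
      cases h with
      | zero => simp [isFirstPassage_zero_iff]
      | succ h => simpa using ih (i := i) (h := h)

lemma isExcursionTails_one_iff {i : ℕ} {l : List (List Bool)} :
    IsExcursionTails (fun _ ↦ 1) i l ↔ ∀ w ∈ l, ∃ D, w = D ++ [false] ∧ IsDyckPath D := by
  induction l generalizing i with
  | nil => simp [IsExcursionTails]
  | cons w l ih =>
    have := isFirstPassage_one_iff (i := i + 1) (h := 0) (w := w)
    simp_all [IsExcursionTails, isDyckPath_iff_isDyckFrom]

lemma IsExcursionTails.isDyckFrom_map_flatten_append_iff_of_one {i h : ℕ} {l : List (List Bool)}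
    {v : List Bool} (hl : IsExcursionTails (fun _ ↦ 1) i l) :
    IsDyckFrom h ((l.map (List.cons true)).flatten ++ v) ↔ IsDyckFrom h v := by
  induction l generalizing i with
  | nil => rfl
  | cons w l ih =>
    obtain ⟨D, rfl, hD⟩ := isExcursionTails_one_iff.1 hl w List.mem_cons_self
    rw [List.map_cons, List.flatten_cons, List.append_assoc, List.cons_append,
      isDyckFrom_true_cons, ← ih hl.2]
    exact hl.1.isDyckFrom_append_iff (fun _ ↦ .inr rfl) zero_le_one (by simp)
      (by grind [IsDyckPath])

lemma mem_excursionFactorizations_one_iff {m k : ℕ} {A B : List Bool} {l : List (List Bool)} :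
    (A, l, B) ∈ excursionFactorizations (fun _ ↦ 1) (m + k) k ↔
      (l.length = k ∧ ∀ w ∈ l, ∃ D, w = D ++ [false] ∧ IsDyckPath D) ∧
        IsDyckPath (A ++ false :: B) ∧
          (A ++ false :: B).count true + l.flatten.count true = m := by
  rw [mem_excursionFactorizations_iff, ← isExcursionTails_one_iff (i := A.count true),
    isDyckPath_iff_isDyckFrom]
  refine and_congr_right fun ⟨_, hl⟩ ↦ and_congr (isDyckFrom_append_congr fun h ↦ ?_) (by grind)
  cases h <;> simp [hl.isDyckFrom_map_flatten_append_iff_of_one]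

/-- The sequences `(P_0, P_1, …, P_k)` of Dyck words with sizes adding up to `m`, where `P_0` is
marked at one of its down steps; `q` is the position of the mark. -/
def markedDyckSequences (k m : ℕ) : Set ((List Bool × ℕ) × (Fin k → List Bool)) :=
  {((w, q), D) | IsDyckPath w ∧ q < w.length ∧ w.getD q true = false ∧
    (∀ j, IsDyckPath (D j)) ∧ w.count true + ∑ j, (D j).count true = m}

lemma take_append_cons_drop_of_getD_eq {α : Type*} {l : List α} {q : ℕ} {x y : α}
    (hq : q < l.length) (h : l.getD q y = x) : l.take q ++ x :: l.drop (q + 1) = l := by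
  rw [← h, List.getD_eq_getElem _ _ hq, List.getElem_cons_drop, List.take_append_drop]

theorem bijOn_markedDyckSequences_excursionFactorizations (k m : ℕ) :
    Set.BijOn
      (fun ((w, q), D) ↦ (w.take q, List.ofFn fun j ↦ D j ++ [false], w.drop (q + 1)))
      (markedDyckSequences k m) (excursionFactorizations (fun _ ↦ 1) (m + k) k) := by
  have hcount (D : Fin k → List Bool) :
      (List.ofFn fun j ↦ D j ++ [false]).flatten.count true = ∑ j, (D j).count true := by
    simp [List.count_flatten, List.map_ofFn, Function.comp_def, List.sum_ofFn]
  refine ⟨?_, ?_, ?_⟩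
  · rintro ⟨⟨w, q⟩, D⟩ ⟨hw, hqw, hq, hD, hm⟩
    refine mem_excursionFactorizations_one_iff.2 ⟨⟨List.length_ofFn, ?_⟩, ?_⟩
    · exact List.forall_mem_ofFn_iff.2 fun j ↦ ⟨D j, rfl, hD j⟩
    · rw [take_append_cons_drop_of_getD_eq hqw hq, hcount]
      exact ⟨hw, hm⟩
  · rintro ⟨⟨w, q⟩, D⟩ ⟨-, hqw, hq, -⟩ ⟨⟨w', q'⟩, D'⟩ ⟨-, hqw', hq', -⟩ e
    obtain ⟨hA, e⟩ := Prod.mk.inj e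
    obtain ⟨hl, hB⟩ := Prod.mk.inj e
    obtain rfl : q = q' := by simpa [hqw.le, hqw'.le] using congrArg List.length hA
    obtain rfl : w = w' := by
      rw [← take_append_cons_drop_of_getD_eq hqw hq, hA, hB,
        take_append_cons_drop_of_getD_eq hqw' hq']
    obtain rfl : D = D' := by
      ext1 j
      exact List.append_cancel_right (congrFun (List.ofFn_injective hl) j)
    rfl
  · rintro ⟨A, l, B⟩ hp
    obtain ⟨⟨rfl, hl⟩, hdyck, hm⟩ := mem_excursionFactorizations_one_iff.1 hp
    choose D hlD hD using fun j : Fin l.length ↦ hl l[j] (List.getElem_mem _)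
    obtain hofFn : (List.ofFn fun j ↦ D j ++ [false]) = l := by
      simp only [← hlD]
      exact List.ofFn_getElem
    refine ⟨((A ++ false :: B, A.length), D), ⟨hdyck, by simp, by simp, hD, ?_⟩, by simp [hofFn]⟩
    rwa [← hcount, hofFn]

end Tamari

theorem nonempty_rightIntervals_equiv {δ : ℕ → ℤ} (hδ : IsIncFun δ) (m : ℕ) {k : ℕ} (hk : k ≠ 0) :
    Nonempty (rightIntervals δ (m + k) k ≃ markedDyckSequences k m) :=
  ⟨(bijOn_excursionFactorizations_rightIntervals δ (m + k) hk).equiv _ |>.symm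
    |>.trans ((bijOn_excursionFactorizations_markedPathsFrom hδ k m).equiv _)
    |>.trans ((bijOn_excursionFactorizations_markedPathsFrom (fun _ ↦ .inr rfl) k m).equiv _).symm
    |>.trans ((bijOn_markedDyckSequences_excursionFactorizations k m).equiv _).symm⟩

theorem ncard_rightIntervals {δ : ℕ → ℤ} (hδ : IsIncFun δ) (m : ℕ) {k : ℕ} (hk : k ≠ 0) :
    (rightIntervals δ (m + k) k).ncard = (2 * m + k).choose (m + k + 1) := by
  have e := ((bijOn_excursionFactorizations_rightIntervals δ (m + k) hk).equiv _).symm.trans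
    ((bijOn_excursionFactorizations_markedPathsFrom hδ k m).equiv _)
  rw [← Nat.card_coe_set_eq, Nat.card_congr e, Nat.card_coe_set_eq, ncard_markedPathsFrom]
  simp

lemma rightIntervals_eq_empty (δ : ℕ → ℤ) {n k : ℕ} (hnk : n < k) :
    rightIntervals δ n k = ∅ := by
  rw [← (bijOn_excursionFactorizations_rightIntervals δ n (by omega)).image_eq,
    Set.image_eq_empty, Set.eq_empty_iff_forall_notMem]
  rintro ⟨A, l, B⟩ hp
  have hcount := (mem_excursionFactorizations_iff.1 hp).2.2
  omega

lemma markedDyckSequences_zero_eq_empty (k : ℕ) : markedDyckSequences k 0 = ∅ := by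
  rw [Set.eq_empty_iff_forall_notMem]
  rintro ⟨⟨w, q⟩, D⟩ ⟨⟨hbalanced, -⟩, hqw, hq, -, hcount⟩
  have hdown : false ∈ w := by
    rw [← hq, List.getD_eq_getElem _ _ hqw]
    exact List.getElem_mem hqw
  have := List.count_pos_iff.2 hdown
  omega

theorem stmt19_general {δ : ℕ → ℤ} (hδ : IsIncFun δ) (n : ℕ) {k : ℕ} (hk : k ≠ 0) :
    Nonempty (rightIntervals δ n k ≃ markedDyckSequences k (n - k)) ∧
      (rightIntervals δ n k).ncard = (2 * n - k).choose (n + 1) := by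
  obtain hnk | hkn := lt_or_ge n k
  · rw [rightIntervals_eq_empty δ hnk, Nat.sub_eq_zero_of_le hnk.le,
      markedDyckSequences_zero_eq_empty, Set.ncard_empty, Nat.choose_eq_zero_of_lt (by omega)]
    exact ⟨⟨Equiv.equivOfIsEmpty _ _⟩, rfl⟩
  · obtain ⟨m, rfl⟩ := Nat.exists_eq_add_of_le' hkn
    rw [Nat.add_sub_cancel, show 2 * (m + k) - k = 2 * m + k by omega]
    exact ⟨nonempty_rightIntervals_equiv hδ m hk, ncard_rightIntervals hδ m hk⟩

/-- right intervals of height `k ≥ 2` in `Tam^δ_n` are in bijection with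
sequences `(P₀, P₁, …, P_k)` of Dyck words, `P₀` marked at one of its down steps, whose
sizes add up to `n - k`; in particular there are `binom (2n-k) (n+1)` of them. -/
theorem stmt19 (n k : ℕ) (hn : 1 ≤ n) (hk : 2 ≤ k) (δ : ℕ → ℤ) (hδ : IsIncFun δ) :
    Nonempty (
      {pq : List Bool × List Bool // IsDyckWord n pq.1 ∧ IsDyckWord n pq.2 ∧
        ∃ (A B : List Bool) (Cs : List (List Bool)), Cs.length = k ∧
          pq.1 = A ++ false :: (Cs.flatten ++ B) ∧
          pq.2 = A ++ (Cs.flatten ++ false :: B) ∧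
          ∀ j < k, IsDeltaExcAt δ pq.1 (A.length + 1 + ((Cs.take j).flatten).length)
            (Cs.getD j [])} ≃
      {s : (List Bool × ℕ) × (Fin k → List Bool) //
        IsDyckPath s.1.1 ∧ s.1.2 < s.1.1.length ∧ s.1.1.getD s.1.2 true = false ∧
        (∀ j, IsDyckPath (s.2 j)) ∧
        s.1.1.count true + ∑ j, (s.2 j).count true = n - k}) ∧
    {pq : List Bool × List Bool | IsDyckWord n pq.1 ∧ IsDyckWord n pq.2 ∧
        ∃ (A B : List Bool) (Cs : List (List Bool)), Cs.length = k ∧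
          pq.1 = A ++ false :: (Cs.flatten ++ B) ∧
          pq.2 = A ++ (Cs.flatten ++ false :: B) ∧
          ∀ j < k, IsDeltaExcAt δ pq.1 (A.length + 1 + ((Cs.take j).flatten).length)
            (Cs.getD j [])}.ncard
      = (2 * n - k).choose (n + 1) := by
  exact stmt19_general hδ n (by omega)
end
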